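/- arXiv:2206.10246 — 3 statements merged into one kernel-verified Lean document; each statement's English description precedes it below -/
import Mathlib

section
/- Let p > 0, q ≥ 1 an integer, r ∈ (0,1), and A, B real with -1 < A < p - 1. Define K̃(X) = ∫₀^r u^{A + B X} (1 - exp(-X/(q u^p))) du for small X > 0. Then lim_{X → 0⁺} X^{-(A+1)/p} K̃(X) = ∫₀^∞ v^A (1 - exp(-1/(q v^p))) dv, and this improper integral converges. -/
open MeasureTheory Set Filter
open scoped Topology Pointwise

/-!
Substituting `u = X ^ (1 / p) * v` cancels the factor `X ^ (-(A + 1) / p)` up to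
`X ^ (B / p * X) → 1`, and leaves the integral of `v ^ (A + B * X) * (1 - exp (-1 / (q * v ^ p)))`
over `(0, r * X ^ (-1 / p))`, an interval that exhausts `(0, ∞)`. Pick `b` and `c` with
`-1 < b < A < c < p - 1`. For small `X` the exponent `A + B * X` stays in `(b, c)`, where
`v ^ (A + B * X) ≤ v ^ b + v ^ c`. Both terms stay integrable after multiplication by
`1 - exp (-1 / (q * v ^ p))`, which is at most `1` and at most `1 / (q * v ^ p)`, so dominated
convergence gives the limit.
-/

theorem tendsto_rpow_mul_self_nhdsGT_zero (c : ℝ) :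
    Tendsto (fun x : ℝ => x ^ (c * x)) (𝓝[>] 0) (𝓝 1) := by
  have hexp : Continuous fun x : ℝ => Real.exp (c * (x * Real.log x)) :=
    Real.continuous_exp.comp (continuous_const.mul Real.continuous_mul_log)
  have hlim := (hexp.tendsto' 0 1 (by simp)).mono_left (nhdsWithin_le_nhds (s := Ioi 0))
  refine hlim.congr' ?_
  filter_upwards [self_mem_nhdsWithin] with x hx
  rw [Real.rpow_def_of_pos hx, mul_comm x, mul_left_comm]

theorem tendsto_rpow_nhdsGT_zero {y : ℝ} (hy : 0 < y) :
    Tendsto (fun x : ℝ => x ^ y) (𝓝[>] 0) (𝓝[>] 0) := by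
  refine tendsto_nhdsWithin_iff.mpr ⟨?_, ?_⟩
  · exact ((Real.continuous_rpow_const hy.le).tendsto' 0 0 (Real.zero_rpow hy.ne')).mono_left
      nhdsWithin_le_nhds
  · filter_upwards [self_mem_nhdsWithin] with x hx using Real.rpow_pos_of_pos hx y

theorem rpow_le_rpow_add_rpow {v b c x : ℝ} (hv : 0 < v) (hbx : b ≤ x) (hxc : x ≤ c) :
    v ^ x ≤ v ^ b + v ^ c := by
  rcases le_total v 1 with h | h
  · exact (Real.rpow_le_rpow_of_exponent_ge hv h hbx).trans
      (le_add_of_nonneg_right (Real.rpow_nonneg hv.le c))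
  · exact (Real.rpow_le_rpow_of_exponent_le h hxc).trans
      (le_add_of_nonneg_left (Real.rpow_nonneg hv.le b))

section TruncatedMellin

variable {E : Type*} [NormedAddCommGroup E] [NormedSpace ℝ E]

theorem aestronglyMeasurable_rpow_smul_of_rpow_smul {φ : ℝ → E} {b : ℝ} (x : ℝ)
    (hφ : AEStronglyMeasurable (fun v => v ^ b • φ v) (volume.restrict (Ioi 0))) :
    AEStronglyMeasurable (fun v => v ^ x • φ v) (volume.restrict (Ioi 0)) := by
  have hpow : Measurable fun v : ℝ => v ^ (x - b) := by fun_prop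
  refine (hpow.aestronglyMeasurable.smul hφ).congr ?_
  filter_upwards [ae_restrict_mem measurableSet_Ioi] with v (hv : 0 < v)
  rw [Pi.smul_apply', smul_smul, ← Real.rpow_add hv, sub_add_cancel]

theorem setIntegral_Ioo_rpow_smul_comp_div (φ : ℝ → E) (r x : ℝ) {s : ℝ} (hs : 0 < s) :
    ∫ u in Ioo 0 r, u ^ x • φ (u / s) = s ^ (x + 1) • ∫ v in Ioo 0 (r / s), v ^ x • φ v := by
  have hIoo : s • Ioo 0 (r / s) = Ioo 0 r := by
    rw [LinearOrderedField.smul_Ioo hs, mul_zero, mul_div_cancel₀ r hs.ne']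
  have hsub := Measure.setIntegral_comp_smul_of_pos volume (fun u => u ^ x • φ (u / s))
    (Ioo 0 (r / s)) hs
  rw [hIoo, Module.finrank_self, pow_one, eq_inv_smul_iff₀ hs.ne'] at hsub
  have hscale : ∫ v in Ioo 0 (r / s), (s • v) ^ x • φ (s • v / s) =
      s ^ x • ∫ v in Ioo 0 (r / s), v ^ x • φ v := by
    rw [← integral_smul]
    refine setIntegral_congr_fun measurableSet_Ioo fun v hv => ?_
    simp only [smul_eq_mul, mul_div_cancel_left₀ v hs.ne', Real.mul_rpow hs.le hv.1.le, mul_smul]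
  rw [← hsub, hscale, smul_smul, Real.rpow_add_one hs.ne', mul_comm]

variable {ι : Type*} {l : Filter ι} [l.IsCountablyGenerated] {φ : ℝ → E} {a b c : ℝ} {x : ι → ℝ}

theorem tendsto_setIntegral_Ioo_rpow_smul
    (hφb : IntegrableOn (fun v => v ^ b • φ v) (Ioi 0))
    (hφc : IntegrableOn (fun v => v ^ c • φ v) (Ioi 0)) (ha : a ∈ Ioo b c) {R : ι → ℝ}
    (hx : Tendsto x l (𝓝 a)) (hR : Tendsto R l atTop) :
    Tendsto (fun i => ∫ v in Ioo 0 (R i), v ^ x i • φ v) l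
      (𝓝 (∫ v in Ioi 0, v ^ a • φ v)) := by
  simp_rw [← Ioi_inter_Iio, ← setIntegral_indicator measurableSet_Iio]
  refine tendsto_integral_filter_of_dominated_convergence
    (fun v => ‖v ^ b • φ v‖ + ‖v ^ c • φ v‖) (.of_forall fun i => ?_) ?_
    (hφb.norm.add hφc.norm) ?_
  · exact (aestronglyMeasurable_rpow_smul_of_rpow_smul (x i) hφb.1).indicator measurableSet_Iio
  · filter_upwards [hx.eventually_mem (Ioo_mem_nhds ha.1 ha.2)] with i hi
    filter_upwards [ae_restrict_mem measurableSet_Ioi] with v (hv : 0 < v)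
    have norm_smul_rpow (y : ℝ) : ‖v ^ y • φ v‖ = v ^ y * ‖φ v‖ := by
      rw [norm_smul, Real.norm_of_nonneg (Real.rpow_nonneg hv.le y)]
    refine (norm_indicator_le_norm_self _ _).trans ?_
    simp only [norm_smul_rpow, ← add_mul]
    gcongr
    exact rpow_le_rpow_add_rpow hv hi.1.le hi.2.le
  · filter_upwards [ae_restrict_mem measurableSet_Ioi] with v (hv : 0 < v)
    have hpow : Tendsto (fun i => v ^ x i • φ v) l (𝓝 (v ^ a • φ v)) :=
      ((Real.continuousAt_const_rpow hv.ne').tendsto.comp hx).smul_const (φ v)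
    refine hpow.congr' ?_
    filter_upwards [hR.eventually_gt_atTop v] with i hi
    exact (indicator_of_mem (mem_Iio.mpr hi) fun v => v ^ x i • φ v).symm

theorem tendsto_rpow_smul_setIntegral_Ioo_rpow_smul_comp_div
    (hφb : IntegrableOn (fun v => v ^ b • φ v) (Ioi 0))
    (hφc : IntegrableOn (fun v => v ^ c • φ v) (Ioi 0)) (ha : a ∈ Ioo b c) {s : ι → ℝ}
    (hx : Tendsto x l (𝓝 a)) (hs : Tendsto s l (𝓝[>] 0))
    (hsx : Tendsto (fun i => s i ^ (x i - a)) l (𝓝 1)) {r : ℝ} (hr : 0 < r) :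
    Tendsto (fun i => s i ^ (-(a + 1)) • ∫ u in Ioo 0 r, u ^ x i • φ (u / s i)) l
      (𝓝 (∫ v in Ioi 0, v ^ a • φ v)) := by
  have hR : Tendsto (fun i => r / s i) l atTop := hs.inv_tendsto_nhdsGT_zero.const_mul_atTop hr
  have hlim := hsx.smul (tendsto_setIntegral_Ioo_rpow_smul hφb hφc ha hx hR)
  rw [one_smul] at hlim
  refine hlim.congr' ?_
  filter_upwards [hs.eventually_mem self_mem_nhdsWithin] with i (hi : 0 < s i)
  rw [setIntegral_Ioo_rpow_smul_comp_div φ r (x i) hi, smul_smul, ← Real.rpow_add hi,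
    neg_add_eq_sub, add_sub_add_right_eq_sub]

end TruncatedMellin

theorem abs_one_sub_exp_neg_le_min {y : ℝ} (hy : 0 ≤ y) : |1 - Real.exp (-y)| ≤ min 1 y := by
  rw [abs_of_nonneg (sub_nonneg.mpr (Real.exp_le_one_iff.mpr (neg_nonpos.mpr hy)))]
  exact le_min (sub_le_self 1 (Real.exp_pos _).le) (sub_le_comm.mp (Real.one_sub_le_exp_neg y))

theorem abs_one_sub_exp_neg_one_div_mul_rpow_le_min {p q v : ℝ} (hq : 0 < q) (hv : 0 < v) :
    |1 - Real.exp (-1 / (q * v ^ p))| ≤ min 1 (q⁻¹ * v ^ (-p)) := by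
  have h := abs_one_sub_exp_neg_le_min (y := 1 / (q * v ^ p)) (by positivity)
  rwa [← neg_div, one_div, mul_inv, ← Real.rpow_neg hv.le] at h

theorem integrableOn_rpow_mul_one_sub_exp {p q a : ℝ} (hq : 0 < q) (ha : -1 < a)
    (hap : a < p - 1) :
    IntegrableOn (fun v : ℝ => v ^ a * (1 - Real.exp (-1 / (q * v ^ p)))) (Ioi 0) := by
  have hcont : ContinuousOn (fun v : ℝ => 1 - Real.exp (-1 / (q * v ^ p))) (Ioi 0) := by
    intro v hv
    have hv0 : v ≠ 0 := ne_of_gt hv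
    have hqv : q * v ^ p ≠ 0 := (mul_pos hq (Real.rpow_pos_of_pos hv p)).ne'
    have hpow : ContinuousAt (fun v : ℝ => v ^ p) v := Real.continuousAt_rpow_const v p (.inl hv0)
    exact ContinuousAt.continuousWithinAt (by fun_prop (disch := assumption))
  have htop : (fun v : ℝ => 1 - Real.exp (-1 / (q * v ^ p))) =O[atTop] (· ^ (-p)) := by
    refine .of_bound q⁻¹ ?_
    filter_upwards [eventually_gt_atTop 0] with v hv
    rw [Real.norm_of_nonneg (Real.rpow_nonneg hv.le _)]
    exact (abs_one_sub_exp_neg_one_div_mul_rpow_le_min hq hv).trans (min_le_right _ _)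
  have hbot : (fun v : ℝ => 1 - Real.exp (-1 / (q * v ^ p)))
      =O[𝓝[>] 0] (· ^ (-0 : ℝ)) := by
    simp only [neg_zero, Real.rpow_zero]
    refine .of_bound 1 ?_
    filter_upwards [self_mem_nhdsWithin] with v hv
    rw [norm_one, mul_one]
    exact (abs_one_sub_exp_neg_one_div_mul_rpow_le_min hq hv).trans (min_le_left _ _)
  have h := mellin_convergent_of_isBigO_scalar (s := a + 1)
    (hcont.locallyIntegrableOn measurableSet_Ioi) htop (by linarith) hbot (by linarith)
  rwa [add_sub_cancel_right] at h

theorem neg_one_div_mul_div_rpow_one_div {p q u X : ℝ} (hp : p ≠ 0) (hu : 0 ≤ u) (hX : 0 ≤ X) :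
    -1 / (q * (u / X ^ (1 / p)) ^ p) = -X / (q * u ^ p) := by
  rw [Real.div_rpow hu (Real.rpow_nonneg hX _), ← Real.rpow_mul hX, one_div_mul_cancel hp,
    Real.rpow_one, mul_div_assoc', div_div_eq_mul_div, neg_one_mul]

theorem stmt8_general {p q r A : ℝ} (B : ℝ) (hq : 0 < q) (hr : 0 < r) (hA : -1 < A)
    (hA' : A < p - 1) :
    IntegrableOn (fun v : ℝ => v ^ A * (1 - Real.exp (-1 / (q * v ^ p)))) (Ioi 0) volume ∧
    Tendsto
      (fun X : ℝ => X ^ (-(A + 1) / p) *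
        ∫ u in Ioo (0 : ℝ) r, u ^ (A + B * X) * (1 - Real.exp (-X / (q * u ^ p))))
      (𝓝[>] 0)
      (𝓝 (∫ v in Ioi (0 : ℝ), v ^ A * (1 - Real.exp (-1 / (q * v ^ p))))) := by
  refine ⟨integrableOn_rpow_mul_one_sub_exp hq hA hA', ?_⟩
  have hp : 0 < p := by linarith
  obtain ⟨b, hb, hbA⟩ := exists_between hA
  obtain ⟨c, hAc, hc⟩ := exists_between hA'
  have hexponent : Tendsto (fun X => A + B * X) (𝓝[>] 0) (𝓝 A) :=
    (Continuous.tendsto' (by fun_prop) 0 A (by simp)).mono_left nhdsWithin_le_nhds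
  have hscale : Tendsto (fun X : ℝ => (X ^ (1 / p)) ^ (A + B * X - A))
      (𝓝[>] 0) (𝓝 1) := by
    refine (tendsto_rpow_mul_self_nhdsGT_zero (1 / p * B)).congr' ?_
    filter_upwards [self_mem_nhdsWithin] with X (hX : 0 < X)
    rw [← Real.rpow_mul hX.le, add_sub_cancel_left, mul_assoc]
  refine (tendsto_rpow_smul_setIntegral_Ioo_rpow_smul_comp_div
    (integrableOn_rpow_mul_one_sub_exp hq hb (hbA.trans hA'))
    (integrableOn_rpow_mul_one_sub_exp hq (hA.trans hAc) hc) ⟨hbA, hAc⟩ hexponent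
    (tendsto_rpow_nhdsGT_zero (one_div_pos.mpr hp)) hscale hr).congr' ?_
  filter_upwards [self_mem_nhdsWithin] with X (hX : 0 < X)
  rw [← Real.rpow_mul hX.le, one_div_mul_eq_div, smul_eq_mul]
  congr 1
  refine setIntegral_congr_fun measurableSet_Ioo fun u hu => ?_
  simp only [smul_eq_mul, neg_one_div_mul_div_rpow_one_div hp.ne' hu.1.le hX.le]

/-- For `p > 0` and `-1 < A < p - 1`, with
`K̃(X) = ∫₀^r u^{A+BX} (1 - exp(-X/(q u^p))) du`, one has
`lim_{X → 0⁺} X^{-(A+1)/p} K̃(X) = ∫₀^∞ v^A (1 - exp(-1/(q v^p))) dv`,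
and this improper integral converges. -/
theorem stmt8 (p : ℝ) (hp : 0 < p) (q : ℕ) (hq : 1 ≤ q) (r : ℝ)
    (hr : r ∈ Ioo (0 : ℝ) 1) (A B : ℝ) (hA : -1 < A) (hA' : A < p - 1) :
    IntegrableOn (fun v : ℝ => v ^ A * (1 - Real.exp (-1 / (q * v ^ p)))) (Ioi 0) volume ∧
    Tendsto
      (fun X : ℝ => X ^ (-(A + 1) / p) *
        ∫ u in Ioo (0 : ℝ) r, u ^ (A + B * X) * (1 - Real.exp (-X / (q * u ^ p))))
      (nhdsWithin 0 (Ioi 0))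
      (nhds (∫ v in Ioi (0 : ℝ), v ^ A * (1 - Real.exp (-1 / (q * v ^ p))))) :=
  stmt8_general B (Nat.cast_pos.mpr hq) hr.1 hA hA'
end

section
/- Let p > 0, q ≥ 1 an integer, r ∈ (0,1), B ∈ ℝ, and A = p - 1. Define K̃(X) = ∫₀^r u^{p-1+BX} (1 - exp(-X/(q u^p))) du for small X > 0. Then lim_{X → 0⁺} X^{-1} |log X|^{-1} K̃(X) = 1/(p q). -/
open MeasureTheory Set Filter

open scoped Topology

/-!
The substitution `v = u ^ p` reduces the integral to the case `p = 1`, up to a factor `1 / p`.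
There, `v = X ^ s` spreads the logarithmic scale out evenly: with `φ y = 1 - exp (-y / q)` and
`β = B * X / p`, the normalized integral becomes that of `X ^ (s * β) * (φ y / y)`, where
`y = X ^ (1 - s)`, over `s > p * log r / log X`. As `X → 0⁺`, this lower limit tends
to `0` and the first factor to `1`, while `y` tends to `0` for `s < 1` and to `∞` for `s > 1`,
so the integrand tends to the right derivative `1 / q` of `φ` at `0` if `0 < s < 1` and to `0` if
`s > 1`. Of `φ` only its boundedness and this derivative matter.
-/

section ChangeOfVariables

variable {E : Type*} [NormedAddCommGroup E] [NormedSpace ℝ E]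

theorem setIntegral_comp_rpow_Ioo {p r : ℝ} (hp : 0 < p) (hr : 0 ≤ r) (g : ℝ → E) :
    ∫ u in Ioo 0 r, (p * u ^ (p - 1)) • g (u ^ p) = ∫ v in Ioo 0 (r ^ p), g v := by
  have hind (s : ℝ) (f : ℝ → E) : ∫ u in Ioo 0 s, f u = ∫ u in Ioi 0, (Iio s).indicator f u := by
    rw [setIntegral_indicator measurableSet_Iio, Ioi_inter_Iio]
  rw [hind, hind, ← integral_comp_rpow_Ioi_of_pos (g := (Iio (r ^ p)).indicator g) hp]
  refine setIntegral_congr_fun measurableSet_Ioi fun u hu => ?_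
  have hmem : u ^ p ∈ Iio (r ^ p) ↔ u ∈ Iio r :=
    Real.rpow_lt_rpow_iff (le_of_lt hu) hr hp
  by_cases h : u ∈ Iio r
  · simp only [indicator_of_mem h, indicator_of_mem (hmem.2 h)]
  · simp only [indicator_of_notMem h, indicator_of_notMem (mt hmem.1 h), smul_zero]

theorem image_const_rpow_Ioi_logb {a r : ℝ} (ha0 : 0 < a) (ha1 : a < 1) (hr : 0 < r) :
    (fun s : ℝ => a ^ s) '' Ioi (Real.logb a r) = Ioo 0 r := by
  ext u
  constructor
  · rintro ⟨s, hs, rfl⟩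
    exact ⟨Real.rpow_pos_of_pos ha0 s, (Real.logb_lt_iff_lt_rpow_of_base_lt_one ha0 ha1 hr).1 hs⟩
  · rintro ⟨hu0, hur⟩
    exact ⟨Real.logb a u, Real.logb_lt_logb_of_base_lt_one ha0 ha1 hu0 hur,
      Real.rpow_logb ha0 ha1.ne hu0⟩

theorem setIntegral_Ioo_eq_setIntegral_const_rpow {a r : ℝ} (ha0 : 0 < a) (ha1 : a < 1)
    (hr : 0 < r) (g : ℝ → E) :
    ∫ v in Ioo 0 r, g v = ∫ s in Ioi (Real.logb a r), (-Real.log a * a ^ s) • g (a ^ s) := by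
  have hderiv (s : ℝ) : HasDerivAt (fun s : ℝ => a ^ s) (Real.log a * a ^ s) s := by
    simpa only [mul_one, id] using (hasDerivAt_id s).const_rpow ha0
  rw [← image_const_rpow_Ioi_logb ha0 ha1 hr,
    integral_image_eq_integral_deriv_smul_of_antitoneOn measurableSet_Ioi
      (fun s _ => (hderiv s).hasDerivWithinAt)
      ((Real.strictAnti_rpow_of_base_lt_one ha0 ha1).antitone.antitoneOn _)]
  simp only [neg_mul]

end ChangeOfVariables

/-- The integrand of `X⁻¹ |log X|⁻¹ ∫₀^r v ^ β * φ (X / v) dv` after the substitution `v = X ^ s`,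
which maps the critical range of scales `X < v < 1` to the fixed interval `0 < s < 1`. -/
noncomputable def criticalIntegrand (φ : ℝ → ℝ) (β X s : ℝ) : ℝ :=
  X ^ (s * β) * (φ (X ^ (1 - s)) / X ^ (1 - s))

theorem measurable_criticalIntegrand {φ : ℝ → ℝ} (hφ : Measurable φ) (β X : ℝ) :
    Measurable (criticalIntegrand φ β X) := by
  unfold criticalIntegrand
  fun_prop

theorem inv_mul_inv_mul_setIntegral_eq_setIntegral_criticalIntegrand {X r : ℝ} (hX0 : 0 < X)
    (hX1 : X < 1) (hr : 0 < r) (φ : ℝ → ℝ) (β : ℝ) :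
    X⁻¹ * |Real.log X|⁻¹ * ∫ v in Ioo 0 r, v ^ β * φ (X / v) =
      ∫ s in Ioi (Real.logb X r), criticalIntegrand φ β X s := by
  have hlog : Real.log X < 0 := Real.log_neg hX0 hX1
  have hlog0 : Real.log X ≠ 0 := hlog.ne
  rw [setIntegral_Ioo_eq_setIntegral_const_rpow hX0 hX1 hr, abs_of_neg hlog,
    ← integral_const_mul]
  refine setIntegral_congr_fun measurableSet_Ioi fun s _ => ?_
  have hquot : X ^ (1 - s) = X / X ^ s := by rw [Real.rpow_sub hX0, Real.rpow_one]
  simp only [criticalIntegrand, hquot, ← Real.rpow_mul hX0.le, smul_eq_mul]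
  field_simp

section Domination

variable {φ : ℝ → ℝ} {C M c : ℝ}

theorem exists_abs_div_le_mul_min_of_tendsto (hM : ∀ y, 0 < y → |φ y| ≤ M)
    (hc : Tendsto (fun y => φ y / y) (𝓝[>] 0) (𝓝 c)) :
    ∃ C, ∀ y, 0 < y → |φ y / y| ≤ C * min 1 y⁻¹ := by
  have hlt : ∀ᶠ y in 𝓝[>] 0, |φ y / y| < |c| + 1 :=
    hc.abs.eventually (gt_mem_nhds (lt_add_one |c|))
  obtain ⟨δ, hδ, hsmall⟩ := mem_nhdsGT_iff_exists_Ioo_subset.1 hlt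
  have hδ0 : 0 < δ := hδ
  have hM0 : 0 ≤ M := (abs_nonneg _).trans (hM 1 one_pos)
  refine ⟨max M (max (|c| + 1) (M / δ)), fun y hy => ?_⟩
  have hinv : |φ y / y| ≤ M * y⁻¹ := by
    rw [abs_div, abs_of_pos hy, div_eq_mul_inv]
    exact mul_le_mul_of_nonneg_right (hM y hy) (by positivity)
  rw [mul_min_of_nonneg _ _ (le_max_of_le_left hM0), mul_one]
  refine le_min (le_max_of_le_right ?_)
    (hinv.trans (mul_le_mul_of_nonneg_right (le_max_left _ _) (by positivity)))
  rcases lt_or_ge y δ with hyδ | hyδ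
  · exact le_max_of_le_left (hsmall ⟨hy, hyδ⟩ : _ < _).le
  · refine le_max_of_le_right (hinv.trans ?_)
    rw [← div_eq_mul_inv]
    gcongr

theorem min_one_inv_rpow_one_sub_le_exp {X k : ℝ} (hX0 : 0 < X) (hX : X ≤ Real.exp (-k))
    (hk : 0 ≤ k) (s : ℝ) :
    min 1 (X ^ (1 - s))⁻¹ ≤ Real.exp (k * (1 - s)) := by
  rcases le_total s 1 with hs | hs
  · exact min_le_of_left_le (Real.one_le_exp (mul_nonneg hk (sub_nonneg.2 hs)))
  · refine min_le_of_right_le ?_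
    calc (X ^ (1 - s))⁻¹ = X ^ (s - 1) := by rw [← Real.rpow_neg hX0.le, neg_sub]
      _ ≤ Real.exp (-k) ^ (s - 1) := Real.rpow_le_rpow hX0.le hX (sub_nonneg.2 hs)
      _ = Real.exp (k * (1 - s)) := by rw [← Real.exp_mul]; ring_nf

theorem rpow_mul_le_exp_abs {X β : ℝ} (hX : 0 < X) (hβ : |β * Real.log X| ≤ 1) (s : ℝ) :
    X ^ (s * β) ≤ Real.exp |s| := by
  rw [Real.rpow_def_of_pos hX, Real.exp_le_exp]
  calc Real.log X * (s * β) ≤ |s * (β * Real.log X)| := by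
        rw [mul_comm, mul_assoc]
        exact le_abs_self _
    _ = |s| * |β * Real.log X| := abs_mul _ _
    _ ≤ |s| := mul_le_of_le_one_right (abs_nonneg s) hβ

theorem abs_criticalIntegrand_le {β X s : ℝ} (hC : ∀ y, 0 < y → |φ y / y| ≤ C * min 1 y⁻¹)
    (hX0 : 0 < X) (hX : X ≤ Real.exp (-2)) (hβ : |β * Real.log X| ≤ 1) (hs : -1 < s) :
    |criticalIntegrand φ β X s| ≤ C * Real.exp 4 * Real.exp (-1 * s) := by
  have hC0 : 0 ≤ C := by simpa using (abs_nonneg _).trans (hC 1 one_pos)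
  have habs : |s| ≤ s + 2 := abs_le.2 ⟨by linarith, by linarith⟩
  calc |criticalIntegrand φ β X s|
      = X ^ (s * β) * |φ (X ^ (1 - s)) / X ^ (1 - s)| := by
        rw [criticalIntegrand, abs_mul, abs_of_pos (Real.rpow_pos_of_pos hX0 _)]
    _ ≤ Real.exp |s| * (C * min 1 (X ^ (1 - s))⁻¹) := by
        gcongr
        · exact rpow_mul_le_exp_abs hX0 hβ s
        · exact hC _ (Real.rpow_pos_of_pos hX0 _)
    _ ≤ Real.exp (s + 2) * (C * Real.exp (2 * (1 - s))) := by
        gcongr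
        exact min_one_inv_rpow_one_sub_le_exp hX0 hX zero_le_two s
    _ = C * Real.exp 4 * Real.exp (-1 * s) := by
        rw [mul_left_comm, mul_assoc, ← Real.exp_add, ← Real.exp_add]
        ring_nf

end Domination

section PointwiseLimit

variable {φ β : ℝ → ℝ} {M c s : ℝ}

theorem tendsto_rpow_mul_nhdsGT_zero (hβ : Tendsto (fun X => β X * Real.log X) (𝓝[>] 0) (𝓝 0))
    (s : ℝ) : Tendsto (fun X => X ^ (s * β X)) (𝓝[>] 0) (𝓝 1) := by
  have hexp : Tendsto (fun X => Real.exp (s * (β X * Real.log X))) (𝓝[>] 0) (𝓝 1) := by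
    simpa using (hβ.const_mul s).rexp
  refine hexp.congr' ?_
  filter_upwards [self_mem_nhdsWithin] with X hX
  rw [Real.rpow_def_of_pos hX]
  ring_nf

theorem tendsto_criticalIntegrand_of_lt_one
    (hβ : Tendsto (fun X => β X * Real.log X) (𝓝[>] 0) (𝓝 0))
    (hc : Tendsto (fun y => φ y / y) (𝓝[>] 0) (𝓝 c)) (hs : s < 1) :
    Tendsto (fun X => criticalIntegrand φ (β X) X s) (𝓝[>] 0) (𝓝 c) := by
  have hs_sub : 0 < 1 - s := sub_pos.2 hs
  have hpow : Tendsto (fun X : ℝ => X ^ (1 - s)) (𝓝[>] 0) (𝓝[>] 0) := by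
    refine tendsto_nhdsWithin_iff.2 ⟨?_, ?_⟩
    · simpa [Real.zero_rpow hs_sub.ne'] using
        ((Real.continuous_rpow_const hs_sub.le).tendsto 0).mono_left nhdsWithin_le_nhds
    · filter_upwards [self_mem_nhdsWithin] with X hX using Real.rpow_pos_of_pos hX _
  simpa only [criticalIntegrand, one_mul, Function.comp_def] using
    (tendsto_rpow_mul_nhdsGT_zero hβ s).mul (hc.comp hpow)

theorem tendsto_criticalIntegrand_of_one_lt
    (hβ : Tendsto (fun X => β X * Real.log X) (𝓝[>] 0) (𝓝 0))
    (hM : ∀ y, 0 < y → |φ y| ≤ M) (hs : 1 < s) :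
    Tendsto (fun X => criticalIntegrand φ (β X) X s) (𝓝[>] 0) (𝓝 0) := by
  have hdecay : Tendsto (fun y => φ y / y) atTop (𝓝 0) := by
    refine squeeze_zero_norm' ?_ (tendsto_id.const_div_atTop M)
    filter_upwards [eventually_gt_atTop 0] with y hy
    rw [Real.norm_eq_abs, abs_div, abs_of_pos hy, id]
    exact div_le_div_of_nonneg_right (hM y hy) hy.le
  have hpow : Tendsto (fun X : ℝ => X ^ (1 - s)) (𝓝[>] 0) atTop :=
    tendsto_rpow_neg_nhdsGT_zero (sub_neg.2 hs)
  simpa only [criticalIntegrand, mul_zero, Function.comp_def] using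
    (tendsto_rpow_mul_nhdsGT_zero hβ s).mul (hdecay.comp hpow)

theorem tendsto_logb_base_nhdsGT_zero (r : ℝ) :
    Tendsto (fun X => Real.logb X r) (𝓝[>] 0) (𝓝 0) :=
  Real.tendsto_log_nhdsGT_zero.const_div_atBot (Real.log r)

theorem tendsto_indicator_criticalIntegrand
    (hβ : Tendsto (fun X => β X * Real.log X) (𝓝[>] 0) (𝓝 0)) (hM : ∀ y, 0 < y → |φ y| ≤ M)
    (hc : Tendsto (fun y => φ y / y) (𝓝[>] 0) (𝓝 c)) (r : ℝ) (hs0 : s ≠ 0) (hs1 : s ≠ 1) :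
    Tendsto (fun X => (Ioi (Real.logb X r)).indicator (criticalIntegrand φ (β X) X) s) (𝓝[>] 0)
      (𝓝 ((Ioo 0 1).indicator (fun _ => c) s)) := by
  have hcut := tendsto_logb_base_nhdsGT_zero r
  rcases lt_or_gt_of_ne hs0 with hneg | hpos
  · rw [indicator_of_notMem fun h => hneg.not_gt h.1]
    refine tendsto_const_nhds.congr' ?_
    filter_upwards [hcut.eventually (lt_mem_nhds hneg)] with X hX
    exact (indicator_of_notMem (notMem_Ioi.2 hX.le) _).symm
  have hmem : ∀ᶠ X in 𝓝[>] 0, criticalIntegrand φ (β X) X s =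
      (Ioi (Real.logb X r)).indicator (criticalIntegrand φ (β X) X) s := by
    filter_upwards [hcut.eventually (gt_mem_nhds hpos)] with X hX
    exact (indicator_of_mem (mem_Ioi.2 hX) _).symm
  refine Tendsto.congr' hmem ?_
  rcases lt_or_gt_of_ne hs1 with hlt | hgt
  · rw [indicator_of_mem (show s ∈ Ioo 0 1 from ⟨hpos, hlt⟩)]
    exact tendsto_criticalIntegrand_of_lt_one hβ hc hlt
  · rw [indicator_of_notMem fun h => hgt.not_gt h.2]
    exact tendsto_criticalIntegrand_of_one_lt hβ hM hgt

end PointwiseLimit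

section CriticalAsymptotics

variable {φ β : ℝ → ℝ} {M c p r : ℝ}

theorem tendsto_setIntegral_criticalIntegrand (hφ : Measurable φ)
    (hM : ∀ y, 0 < y → |φ y| ≤ M) (hc : Tendsto (fun y => φ y / y) (𝓝[>] 0) (𝓝 c))
    (hβ : Tendsto (fun X => β X * Real.log X) (𝓝[>] 0) (𝓝 0)) (r : ℝ) :
    Tendsto (fun X => ∫ s in Ioi (Real.logb X r), criticalIntegrand φ (β X) X s) (𝓝[>] 0)
      (𝓝 c) := by
  obtain ⟨C, hC⟩ := exists_abs_div_le_mul_min_of_tendsto hM hc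
  have hlim : ∫ s in Ioi (-1 : ℝ), (Ioo 0 1).indicator (fun _ => c) s = c := by
    rw [setIntegral_indicator measurableSet_Ioo,
      inter_eq_self_of_subset_right (Ioo_subset_Ioi_self.trans (Ioi_subset_Ioi (by norm_num)))]
    simp
  -- The lower limit `logb X r` tends to `0`, from below if `1 < r`; `(-1, ∞)` covers both cases.
  have hdct : Tendsto (fun X => ∫ s in Ioi (-1 : ℝ),
      (Ioi (Real.logb X r)).indicator (criticalIntegrand φ (β X) X) s) (𝓝[>] 0) (𝓝 c) := by
    rw [← hlim]
    refine tendsto_integral_filter_of_dominated_convergence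
      (fun s => C * Real.exp 4 * Real.exp (-1 * s)) ?_ ?_ ?_ ?_
    · exact Eventually.of_forall fun X =>
        ((measurable_criticalIntegrand hφ _ _).indicator measurableSet_Ioi).aestronglyMeasurable
    · have hβ1 : ∀ᶠ X in 𝓝[>] 0, |β X * Real.log X| < 1 :=
        hβ.abs.eventually (gt_mem_nhds (by simp))
      have hXsmall : ∀ᶠ X in 𝓝[>] 0, X < Real.exp (-2) :=
        nhdsWithin_le_nhds (gt_mem_nhds (Real.exp_pos _))
      filter_upwards [self_mem_nhdsWithin, hXsmall, hβ1] with X hX0 hX hβX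
      filter_upwards [ae_restrict_mem measurableSet_Ioi] with s hs
      exact (norm_indicator_le_norm_self _ _).trans
        (abs_criticalIntegrand_le hC hX0 hX.le hβX.le hs)
    · exact (integrableOn_exp_mul_Ioi (by norm_num) _).const_mul _
    · filter_upwards [Measure.ae_ne _ 0, Measure.ae_ne _ 1] with s hs0 hs1
      exact tendsto_indicator_criticalIntegrand hβ hM hc r hs0 hs1
  refine hdct.congr' ?_
  filter_upwards [(tendsto_logb_base_nhdsGT_zero r).eventually
    (lt_mem_nhds neg_one_lt_zero)] with X hX
  rw [setIntegral_indicator measurableSet_Ioi,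
    inter_eq_self_of_subset_right (Ioi_subset_Ioi hX.le)]

theorem setIntegral_rpow_mul_comp_div_rpow (hp : 0 < p) (hr : 0 ≤ r) (φ : ℝ → ℝ) (β X : ℝ) :
    ∫ u in Ioo 0 r, u ^ (p - 1 + β) * φ (X / u ^ p) =
      p⁻¹ * ∫ v in Ioo 0 (r ^ p), v ^ (β / p) * φ (X / v) := by
  rw [← setIntegral_comp_rpow_Ioo hp hr, ← integral_const_mul]
  refine setIntegral_congr_fun measurableSet_Ioo fun u hu => ?_
  have hpow : (u ^ p) ^ (β / p) = u ^ β := by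
    rw [← Real.rpow_mul hu.1.le, mul_div_cancel₀ β hp.ne']
  simp only [smul_eq_mul, hpow, Real.rpow_add hu.1]
  field_simp

theorem tendsto_inv_mul_inv_mul_setIntegral_rpow_mul_comp_div_rpow (hp : 0 < p) (hr : 0 < r)
    (hφ : Measurable φ) (hM : ∀ y, 0 < y → |φ y| ≤ M)
    (hc : Tendsto (fun y => φ y / y) (𝓝[>] 0) (𝓝 c))
    (hβ : Tendsto (fun X => β X * Real.log X) (𝓝[>] 0) (𝓝 0)) :
    Tendsto (fun X => X⁻¹ * |Real.log X|⁻¹ *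
      ∫ u in Ioo 0 r, u ^ (p - 1 + β X) * φ (X / u ^ p)) (𝓝[>] 0) (𝓝 (p⁻¹ * c)) := by
  have hβp : Tendsto (fun X => β X / p * Real.log X) (𝓝[>] 0) (𝓝 0) := by
    simpa only [div_mul_eq_mul_div, zero_div] using hβ.div_const p
  refine ((tendsto_setIntegral_criticalIntegrand hφ hM hc hβp (r ^ p)).const_mul p⁻¹).congr' ?_
  filter_upwards [self_mem_nhdsWithin, nhdsWithin_le_nhds (gt_mem_nhds one_pos)] with X hX0 hX1
  rw [setIntegral_rpow_mul_comp_div_rpow hp hr.le, mul_left_comm,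
    inv_mul_inv_mul_setIntegral_eq_setIntegral_criticalIntegrand hX0 hX1
      (Real.rpow_pos_of_pos hr p)]

end CriticalAsymptotics

theorem abs_one_sub_exp_neg_div_le_one {q y : ℝ} (hq : 0 < q) (hy : 0 < y) :
    |1 - Real.exp (-y / q)| ≤ 1 := by
  have hle : Real.exp (-y / q) ≤ 1 :=
    Real.exp_le_one_iff.2 (div_nonpos_of_nonpos_of_nonneg (neg_nonpos.2 hy.le) hq.le)
  rw [abs_of_nonneg (sub_nonneg.2 hle)]
  exact sub_le_self 1 (Real.exp_pos _).le

theorem tendsto_one_sub_exp_neg_div_div_nhdsGT_zero (q : ℝ) :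
    Tendsto (fun y : ℝ => (1 - Real.exp (-y / q)) / y) (𝓝[>] 0) (𝓝 q⁻¹) := by
  have hderiv : HasDerivAt (fun y : ℝ => 1 - Real.exp (-y / q)) q⁻¹ 0 := by
    simpa [neg_div] using (((hasDerivAt_id (0 : ℝ)).neg.div_const q).exp).const_sub 1
  refine (hderiv.tendsto_slope.mono_left (nhdsGT_le_nhdsNE 0)).congr fun y => ?_
  simp [slope_def_field]

theorem tendsto_const_mul_id_mul_log_nhdsGT_zero (B : ℝ) :
    Tendsto (fun X => B * X * Real.log X) (𝓝[>] 0) (𝓝 0) := by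
  simpa [mul_assoc] using
    ((Real.continuous_mul_log.tendsto 0).mono_left nhdsWithin_le_nhds).const_mul B

theorem stmt9_general {p q r : ℝ} (hp : 0 < p) (hq : 0 < q) (hr : 0 < r) (B : ℝ) :
    Tendsto
      (fun X : ℝ => X⁻¹ * |Real.log X|⁻¹ *
        ∫ u in Ioo (0 : ℝ) r, u ^ (p - 1 + B * X) * (1 - Real.exp (-X / (q * u ^ p))))
      (𝓝[>] 0) (𝓝 (1 / (p * q))) := by
  have hcrit := tendsto_inv_mul_inv_mul_setIntegral_rpow_mul_comp_div_rpow hp hr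
    (φ := fun y => 1 - Real.exp (-y / q)) (by fun_prop)
    (fun y => abs_one_sub_exp_neg_div_le_one hq)
    (tendsto_one_sub_exp_neg_div_div_nhdsGT_zero q) (tendsto_const_mul_id_mul_log_nhdsGT_zero B)
  simpa only [one_div, mul_inv, ← neg_div, div_div, mul_comm] using hcrit

/-- Critical case `A = p - 1`: with
`K̃(X) = ∫₀^r u^{p-1+BX} (1 - exp(-X/(q u^p))) du`, one has
`lim_{X → 0⁺} X⁻¹ |log X|⁻¹ K̃(X) = 1/(p q)`. -/
theorem stmt9 (p : ℝ) (hp : 0 < p) (q : ℕ) (hq : 1 ≤ q) (r : ℝ)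
    (hr : r ∈ Ioo (0 : ℝ) 1) (B : ℝ) :
    Tendsto
      (fun X : ℝ => X⁻¹ * |Real.log X|⁻¹ *
        ∫ u in Ioo (0 : ℝ) r, u ^ (p - 1 + B * X) * (1 - Real.exp (-X / (q * u ^ p))))
      (nhdsWithin 0 (Ioi 0)) (nhds (1 / (p * q))) :=
  stmt9_general hp (Nat.cast_pos.2 hq) hr.1 B
end

section
/- Let a, b be positive integers with 2 ≤ a < b, p = 1 - a/b, and q, q̃ even integers with 2 ≤ q ≤ b, 2 ≤ q̃ ≤ a, p̃ > 0. With Z(σ) = ∫_{[0,r₁]×[0,r₂]} |x^a y^b + x^a y^{b-q} e^{-1/x^p} + x^{a-q̃} y^b e^{-1/y^{p̃}}|^σ dx dy for -1/b < σ < 0, one has lim_{σ → -1/b⁺} |log(bσ + 1)|^{-1} · Z(σ) = 1/(p q). -/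
open MeasureTheory Set Filter

/-- The function `f(x,y) = x^a y^b + x^a y^{b-q} e^{-1/x^p} + x^{a-q̃} y^b e^{-1/y^{p̃}}`
(case (D)), with the flat exponential factors interpreted as `0` at `0`. -/
noncomputable def fD' (a b q qt : ℕ) (p pt : ℝ) (x y : ℝ) : ℝ :=
  x ^ a * y ^ b + x ^ a * y ^ (b - q) * (if x = 0 then 0 else Real.exp (-1 / x ^ p)) +
    x ^ (a - qt) * y ^ b * (if y = 0 then 0 else Real.exp (-1 / y ^ pt))

/-
Write `ε = b σ + 1`. For fixed `x` the first two terms of `f` cross over at the height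
`A = exp (-1 / (q x ^ p))`. Below `A` the second term keeps the integral over `y` bounded by a
multiple of `x ^ (a σ)`, uniformly in `ε`; above `A` the first term gives
`x ^ (a σ) (1 - A ^ ε) / ε` up to an error of the same size. As `ε → 0` the exponent `a σ`
tends to `p - 1`, and `t / (1 + t) ≤ 1 - e ^ (-t) ≤ 2 t / (2 + t)` with `t = ε / (q x ^ p)` places
the integrand in `x` between `x ^ (p - 1) / (q x ^ p + k ε)` for `k = 1` and `k = 1 / 2`. This
function integrates explicitly, and for either `k` its integral over `[0, r]` is
`-log ε / (p q) + O(1)`.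

In the lower bound all of `f` has to be dominated by `(1 + η) x ^ a y ^ b`. This holds for
`A / x ≤ y ≤ x` and `x` small: the two flat terms are then small relative to the first one, and
`log x` is negligible against `log A`.
-/

open Asymptotics
open scoped Topology

section Exponential

lemma one_sub_exp_neg_le_two_mul_div {t : ℝ} (ht : 0 ≤ t) :
    1 - Real.exp (-t) ≤ 2 * t / (2 + t) := by
  have hlog : 2 * (Real.exp t - 1) / (Real.exp t - 1 + 2) ≤ t := by
    simpa using Real.le_log_one_add_of_nonneg (sub_nonneg.2 (Real.one_le_exp ht))
  rw [div_le_iff₀ (by linarith [Real.exp_pos t])] at hlog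
  rw [le_div_iff₀ (by positivity), Real.exp_neg, ← sub_nonneg]
  have hfactor : 2 * t - (1 - (Real.exp t)⁻¹) * (2 + t) =
      (t * (Real.exp t - 1 + 2) - 2 * (Real.exp t - 1)) * (Real.exp t)⁻¹ := by
    field_simp
    ring
  rw [hfactor]
  exact mul_nonneg (sub_nonneg.2 hlog) (by positivity)

lemma div_one_add_le_one_sub_exp_neg {t : ℝ} (ht : 0 ≤ t) :
    t / (1 + t) ≤ 1 - Real.exp (-t) := by
  have hexp : Real.exp (-t) ≤ (1 + t)⁻¹ := by
    rw [Real.exp_neg]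
    exact inv_anti₀ (by positivity) (by linarith [Real.add_one_le_exp t])
  calc t / (1 + t) = 1 - (1 + t)⁻¹ := by field_simp; ring
    _ ≤ 1 - Real.exp (-t) := by gcongr

lemma isLittleO_exp_neg_one_div_rpow_pow {s : ℝ} (hs : 0 < s) (n : ℕ) :
    (fun x : ℝ => Real.exp (-1 / x ^ s)) =o[𝓝[>] 0] (fun x : ℝ => x ^ n) := by
  refine (isLittleO_iff_tendsto' ?_).2 ?_
  · filter_upwards [self_mem_nhdsWithin] with x hx h
    exact absurd h (pow_pos hx n).ne'
  refine ((tendsto_rpow_mul_exp_neg_mul_atTop_nhds_zero (n / s) 1 one_pos).comp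
    (tendsto_rpow_neg_nhdsGT_zero (neg_lt_zero.2 hs))).congr' ?_
  filter_upwards [self_mem_nhdsWithin] with x (hx : 0 < x)
  have hpow : (x ^ (-s)) ^ (n / s) = (x ^ n)⁻¹ := by
    rw [← Real.rpow_mul hx.le, neg_mul, mul_div_cancel₀ _ hs.ne', Real.rpow_neg hx.le,
      Real.rpow_natCast]
  rw [Function.comp_apply, hpow, Real.rpow_neg hx.le, div_eq_inv_mul, neg_one_mul, neg_div,
    one_div]

lemma one_sub_mul_rpow_neg_le_rpow {x s t : ℝ} (hx : 0 < x) (hs : 0 < s) (ht : 0 ≤ t) :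
    1 - t * (x ^ (-s) / s) ≤ x ^ t := by
  have hlog : -Real.log x ≤ x ^ (-s) / s := by
    simpa [Real.rpow_neg_eq_inv_rpow] using Real.log_le_rpow_div (inv_nonneg.2 hx.le) hs
  calc 1 - t * (x ^ (-s) / s) ≤ 1 - t * -Real.log x := by gcongr
    _ = Real.log x * t + 1 := by ring
    _ ≤ Real.exp (Real.log x * t) := Real.add_one_le_exp _
    _ = x ^ t := (Real.rpow_def_of_pos hx t).symm

end Exponential

section ModelIntegral

variable {p c s r : ℝ}

/-- The model for the integral of `|f| ^ σ`, obtained by carrying out the integration in `y`; the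
parameter `s` is a multiple of `b * σ + 1`. -/
noncomputable def modelIntegral (p c s r : ℝ) : ℝ :=
  ∫ x in 0..r, x ^ (p - 1) / (c * x ^ p + s)

lemma intervalIntegrable_rpow_sub_one_div (hp : 0 < p) (hc : 0 ≤ c) (hs : 0 < s) (hr : 0 ≤ r) :
    IntervalIntegrable (fun x => x ^ (p - 1) / (c * x ^ p + s)) volume 0 r := by
  simp only [div_eq_mul_inv]
  refine (intervalIntegral.intervalIntegrable_rpow' (by linarith)).mul_continuousOn ?_
  refine ContinuousOn.inv₀ (by fun_prop (disch := exact hp.le)) fun x hx => ?_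
  rw [uIcc_of_le hr] at hx
  have : 0 ≤ x := hx.1
  positivity

lemma modelIntegral_eq (hp : 0 < p) (hc : 0 < c) (hs : 0 < s) (hr : 0 ≤ r) :
    modelIntegral p c s r = (Real.log (c * r ^ p + s) - Real.log s) / (p * c) := by
  have hpos : ∀ x : ℝ, 0 ≤ x → 0 < c * x ^ p + s := fun x hx => by positivity
  have hcont : ContinuousOn (fun x : ℝ => Real.log (c * x ^ p + s) / (p * c)) (Icc 0 r) :=
    (ContinuousOn.log (by fun_prop (disch := exact hp.le))
      fun x hx => (hpos x hx.1).ne').div_const _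
  have hderiv : ∀ x ∈ Ioo 0 r, HasDerivAt (fun x : ℝ => Real.log (c * x ^ p + s) / (p * c))
      (x ^ (p - 1) / (c * x ^ p + s)) x := fun x hx => by
    have hrpow := Real.hasDerivAt_rpow_const (p := p) (Or.inl hx.1.ne')
    have hlog := ((hrpow.const_mul c).add_const s).log (hpos x hx.1.le).ne'
    exact (hlog.div_const (p * c)).congr_deriv (by field_simp)
  rw [modelIntegral, intervalIntegral.integral_eq_sub_of_hasDerivAt_of_le hr hcont hderiv
    (intervalIntegrable_rpow_sub_one_div hp hc.le hs hr), Real.zero_rpow hp.ne', mul_zero, zero_add,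
    sub_div]

lemma tendsto_inv_abs_log_nhdsGT_zero :
    Tendsto (fun ε : ℝ => |Real.log ε|⁻¹) (𝓝[>] 0) (𝓝 0) :=
  (tendsto_abs_atBot_atTop.comp Real.tendsto_log_nhdsGT_zero).inv_tendsto_atTop

lemma tendsto_inv_abs_log_mul_modelIntegral {k : ℝ} (hp : 0 < p) (hc : 0 < c) (hk : 0 < k)
    (hr : 0 < r) :
    Tendsto (fun ε => |Real.log ε|⁻¹ * modelIntegral p c (k * ε) r) (𝓝[>] 0)
      (𝓝 (1 / (p * c))) := by
  have hlog : Tendsto (fun ε => Real.log (c * r ^ p + k * ε) - Real.log k) (𝓝[>] 0)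
      (𝓝 (Real.log (c * r ^ p + k * 0) - Real.log k)) := by
    have hne : c * r ^ p + k * 0 ≠ 0 := by positivity
    have hcont : ContinuousAt (fun ε => Real.log (c * r ^ p + k * ε) - Real.log k) 0 := by
      fun_prop (disch := assumption)
    exact hcont.tendsto.mono_left nhdsWithin_le_nhds
  have hlim := ((tendsto_inv_abs_log_nhdsGT_zero.mul hlog).add_const 1).div_const (p * c)
  rw [zero_mul, zero_add] at hlim
  refine hlim.congr' ?_
  filter_upwards [Ioo_mem_nhdsGT zero_lt_one] with ε ⟨hε0, hε1⟩
  have hneg := Real.log_neg hε0 hε1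
  have hne := hneg.ne
  rw [modelIntegral_eq hp hc (mul_pos hk hε0) hr.le, Real.log_mul hk.ne' hε0.ne', abs_of_neg hneg]
  field_simp
  ring

lemma tendsto_inv_abs_log_mul_const_add_modelIntegral {k : ℝ} (hp : 0 < p) (hc : 0 < c)
    (hk : 0 < k) (hr : 0 < r) (C : ℝ) :
    Tendsto (fun ε => |Real.log ε|⁻¹ * (C + modelIntegral p c (k * ε) r)) (𝓝[>] 0)
      (𝓝 (1 / (p * c))) := by
  simpa [mul_add] using (tendsto_inv_abs_log_nhdsGT_zero.mul_const C).add
    (tendsto_inv_abs_log_mul_modelIntegral hp hc hk hr)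

end ModelIntegral

section Integrand

variable {a b q qt : ℕ} {p pt σ x y : ℝ}

lemma fD'_of_pos (hx : 0 < x) (hy : 0 < y) :
    fD' a b q qt p pt x y = x ^ a * y ^ b + x ^ a * y ^ (b - q) * Real.exp (-1 / x ^ p) +
      x ^ (a - qt) * y ^ b * Real.exp (-1 / y ^ pt) := by
  simp [fD', hx.ne', hy.ne']

lemma fD'_pos (hx : 0 < x) (hy : 0 < y) : 0 < fD' a b q qt p pt x y := by
  rw [fD'_of_pos hx hy]
  positivity

lemma measurable_fD' : Measurable (fun z : ℝ × ℝ => fD' a b q qt p pt z.1 z.2) := by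
  have hflat : ∀ s : ℝ, Measurable fun x : ℝ => if x = 0 then 0 else Real.exp (-1 / x ^ s) :=
    fun s => Measurable.ite (measurableSet_singleton 0) measurable_const (by fun_prop)
  have hfst : Measurable fun z : ℝ × ℝ => if z.1 = 0 then 0 else Real.exp (-1 / z.1 ^ p) :=
    (hflat p).comp measurable_fst
  have hsnd : Measurable fun z : ℝ × ℝ => if z.2 = 0 then 0 else Real.exp (-1 / z.2 ^ pt) :=
    (hflat pt).comp measurable_snd
  unfold fD'
  fun_prop

lemma measurable_abs_fD'_rpow :
    Measurable (fun z : ℝ × ℝ => |fD' a b q qt p pt z.1 z.2| ^ σ) :=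
  measurable_fD'.abs.pow_const σ

lemma mul_pow_le_fD' (hx : 0 < x) (hy : 0 < y) : x ^ a * y ^ b ≤ fD' a b q qt p pt x y := by
  rw [fD'_of_pos hx hy, add_assoc]
  exact le_add_of_nonneg_right (by positivity)

lemma mul_pow_mul_exp_le_fD' (hx : 0 < x) (hy : 0 < y) :
    x ^ a * y ^ (b - q) * Real.exp (-1 / x ^ p) ≤ fD' a b q qt p pt x y := by
  rw [fD'_of_pos hx hy, add_right_comm]
  exact le_add_of_nonneg_left (by positivity)

lemma fD'_le_of_flat_le {l m : ℝ} (hx : 0 < x) (hy : 0 < y) (hqb : q ≤ b) (hqta : qt ≤ a)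
    (hl : Real.exp (-1 / x ^ p) ≤ l * y ^ q) (hm : Real.exp (-1 / y ^ pt) ≤ m * x ^ qt) :
    fD' a b q qt p pt x y ≤ (1 + l + m) * (x ^ a * y ^ b) := by
  calc fD' a b q qt p pt x y
      ≤ x ^ a * y ^ b + x ^ a * y ^ (b - q) * (l * y ^ q) +
          x ^ (a - qt) * y ^ b * (m * x ^ qt) := by
        rw [fD'_of_pos hx hy]
        gcongr
    _ = x ^ a * y ^ b + l * (x ^ a * (y ^ (b - q) * y ^ q)) +
          m * (x ^ (a - qt) * x ^ qt * y ^ b) := by ring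
    _ = (1 + l + m) * (x ^ a * y ^ b) := by
        rw [pow_sub_mul_pow _ hqb, pow_sub_mul_pow _ hqta]
        ring

lemma pow_mul_pow_rpow (hx : 0 ≤ x) (hy : 0 ≤ y) (m n : ℕ) (σ : ℝ) :
    (x ^ m * y ^ n) ^ σ = x ^ (m * σ) * y ^ (n * σ) := by
  rw [Real.mul_rpow (by positivity) (by positivity), ← Real.rpow_natCast_mul hx,
    ← Real.rpow_natCast_mul hy]

lemma abs_fD'_rpow_le_of_le {u : ℝ} (hx : 0 < x) (hy : 0 < y) (hσ : σ ≤ 0) (hu : 0 < u)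
    (h : u ≤ fD' a b q qt p pt x y) : |fD' a b q qt p pt x y| ^ σ ≤ u ^ σ := by
  rw [abs_of_pos (fD'_pos hx hy)]
  exact Real.rpow_le_rpow_of_nonpos hu h hσ

lemma abs_fD'_rpow_le (hx : 0 < x) (hy : 0 < y) (hσ : σ ≤ 0) :
    |fD' a b q qt p pt x y| ^ σ ≤ x ^ (a * σ) * y ^ (b * σ) := by
  rw [← pow_mul_pow_rpow hx.le hy.le]
  exact abs_fD'_rpow_le_of_le hx hy hσ (by positivity) (mul_pow_le_fD' hx hy)

lemma le_abs_fD'_rpow {k : ℝ} (hx : 0 < x) (hy : 0 < y) (hσ : σ ≤ 0) (hk : 0 ≤ k)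
    (h : fD' a b q qt p pt x y ≤ k * (x ^ a * y ^ b)) :
    k ^ σ * (x ^ (a * σ) * y ^ (b * σ)) ≤ |fD' a b q qt p pt x y| ^ σ := by
  rw [← pow_mul_pow_rpow hx.le hy.le, ← Real.mul_rpow hk (by positivity),
    abs_of_pos (fD'_pos hx hy)]
  exact Real.rpow_le_rpow_of_nonpos (fD'_pos hx hy) h hσ

lemma integrable_abs_fD'_rpow {r₁ r₂ : ℝ} (hσ : σ ≤ 0) (ha : -1 < a * σ) (hb : -1 < b * σ)
    (hr₁ : 0 ≤ r₁) (hr₂ : 0 ≤ r₂) :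
    Integrable (fun z : ℝ × ℝ => |fD' a b q qt p pt z.1 z.2| ^ σ)
      ((volume.restrict (Ioc 0 r₁)).prod (volume.restrict (Ioc 0 r₂))) := by
  have hx := (intervalIntegrable_iff_integrableOn_Ioc_of_le hr₁).1
    (intervalIntegral.intervalIntegrable_rpow' (a := 0) (b := r₁) ha)
  have hy := (intervalIntegrable_iff_integrableOn_Ioc_of_le hr₂).1
    (intervalIntegral.intervalIntegrable_rpow' (a := 0) (b := r₂) hb)
  refine (hx.mul_prod hy).mono' measurable_abs_fD'_rpow.aestronglyMeasurable ?_
  rw [Measure.prod_restrict]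
  filter_upwards [ae_restrict_mem (measurableSet_Ioc.prod measurableSet_Ioc)] with z hz
  rw [Real.norm_of_nonneg (by positivity)]
  exact abs_fD'_rpow_le hz.1.1 hz.2.1 hσ

lemma intervalIntegrable_abs_fD'_rpow {r s : ℝ} (hσ : σ ≤ 0) (hb : -1 < b * σ) (hx : 0 < x)
    (hr : 0 ≤ r) (hs : 0 ≤ s) :
    IntervalIntegrable (fun y => |fD' a b q qt p pt x y| ^ σ) volume r s := by
  refine ((intervalIntegral.intervalIntegrable_rpow' hb).const_mul (x ^ (a * σ))).mono_fun'
    (measurable_abs_fD'_rpow.comp measurable_prodMk_left).aestronglyMeasurable ?_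
  filter_upwards [ae_restrict_mem measurableSet_uIoc] with y hy
  rw [Real.norm_of_nonneg (by positivity)]
  exact abs_fD'_rpow_le hx ((le_min hr hs).trans_lt hy.1) hσ

lemma intervalIntegrable_integral_abs_fD'_rpow {r₁ r₂ : ℝ} (hσ : σ ≤ 0) (ha : -1 < a * σ)
    (hb : -1 < b * σ) (hr₁ : 0 ≤ r₁) (hr₂ : 0 ≤ r₂) :
    IntervalIntegrable (fun x => ∫ y in 0..r₂, |fD' a b q qt p pt x y| ^ σ) volume 0 r₁ := by
  simp only [intervalIntegral.integral_of_le hr₂]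
  exact (intervalIntegrable_iff_integrableOn_Ioc_of_le hr₁).2
    (integrable_abs_fD'_rpow hσ ha hb hr₁ hr₂).integral_prod_left

lemma setIntegral_abs_fD'_rpow_eq {r₁ r₂ : ℝ} (hσ : σ ≤ 0) (ha : -1 < a * σ)
    (hb : -1 < b * σ) (hr₁ : 0 ≤ r₁) (hr₂ : 0 ≤ r₂) :
    ∫ z in Icc (0 : ℝ) r₁ ×ˢ Icc (0 : ℝ) r₂, |fD' a b q qt p pt z.1 z.2| ^ σ =
      ∫ x in 0..r₁, ∫ y in 0..r₂, |fD' a b q qt p pt x y| ^ σ := by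
  simp only [intervalIntegral.integral_of_le hr₁, intervalIntegral.integral_of_le hr₂]
  rw [Measure.volume_eq_prod, ← Measure.prod_restrict,
    ← Measure.restrict_congr_set Ioc_ae_eq_Icc, ← Measure.restrict_congr_set Ioc_ae_eq_Icc,
    integral_prod _ (integrable_abs_fD'_rpow hσ ha hb hr₁ hr₂)]

end Integrand

section Crossover

variable {q : ℕ} {p x : ℝ}

/-- The height `y` at which the first two terms of `fD'` agree, that is, the solution of
`y ^ q = e^{-1/x^p}`. -/
noncomputable def crossover (q : ℕ) (p x : ℝ) : ℝ :=
  Real.exp (-(q * x ^ p)⁻¹)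

lemma crossover_pos : 0 < crossover q p x :=
  Real.exp_pos _

lemma crossover_le_one (hx : 0 ≤ x) : crossover q p x ≤ 1 :=
  Real.exp_le_one_iff.2 (neg_nonpos.2 (by positivity))

lemma crossover_pow (hq : 0 < q) : crossover q p x ^ q = Real.exp (-1 / x ^ p) := by
  rw [crossover, ← Real.exp_nat_mul]
  congr 1
  field_simp

lemma crossover_rpow (t : ℝ) : crossover q p x ^ t = Real.exp (-(t / (q * x ^ p))) := by
  rw [crossover, ← Real.exp_mul]
  ring_nf

lemma log_crossover : Real.log (crossover q p x) = -(q * x ^ p)⁻¹ :=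
  Real.log_exp _

end Crossover

section CriticalExponent

variable {a b : ℕ} {p σ x r : ℝ}

lemma natCast_mul_add_one_le_one (hσ : σ ≤ 0) : b * σ + 1 ≤ 1 :=
  add_le_of_nonpos_left (mul_nonpos_of_nonneg_of_nonpos (Nat.cast_nonneg b) hσ)

lemma neg_one_lt_natCast_mul (hab : a < b) (hb : 0 < b * σ + 1) : -1 < a * σ := by
  have hab' : (a : ℝ) < b := by exact_mod_cast hab
  nlinarith

lemma critical_exponent_pos (hp : p = 1 - (a : ℝ) / b) (hab : a < b) : 0 < p := by
  rw [hp, sub_pos, div_lt_one (by exact_mod_cast hab.pos)]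
  exact_mod_cast hab

lemma natCast_mul_eq_critical_exponent_sub_one_add (hp : p = 1 - (a : ℝ) / b) (hab : a < b) :
    a * σ = p - 1 + a / b * (b * σ + 1) := by
  have hb0 : (b : ℝ) ≠ 0 := by exact_mod_cast hab.ne_bot
  rw [hp]
  field_simp
  ring

lemma rpow_natCast_mul_le (hp : p = 1 - (a : ℝ) / b) (hab : a < b) (hσ : σ ≤ 0) (hb : 0 < b * σ + 1)
    (hx : 0 < x) (hxr : x ≤ r) :
    x ^ (a * σ) ≤ (1 + (b * σ + 1) * r) * x ^ (p - 1) := by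
  set ε : ℝ := b * σ + 1
  have hb0 : (0 : ℝ) < b := by exact_mod_cast hab.pos
  have hab1 : (a : ℝ) / b ≤ 1 := (div_le_one hb0).2 (by exact_mod_cast hab.le)
  have hε1 : ε ≤ 1 := natCast_mul_add_one_le_one hσ
  have hBernoulli : (1 + (x - 1)) ^ (a / b * ε) ≤ 1 + a / b * ε * (x - 1) :=
    rpow_one_add_le_one_add_mul_self (by linarith) (by positivity) (mul_le_one₀ hab1 hb.le hε1)
  have hle : x ^ (a / b * ε) ≤ 1 + ε * r := by
    rw [add_sub_cancel] at hBernoulli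
    have hnonneg : 0 ≤ a / b * ε := by positivity
    have hle' : a / b * ε ≤ ε := mul_le_of_le_one_left hb.le hab1
    nlinarith
  rw [natCast_mul_eq_critical_exponent_sub_one_add hp hab, Real.rpow_add hx, mul_comm]
  gcongr

lemma rpow_sub_one_div_sub_le {c : ℝ} (hp : p = 1 - (a : ℝ) / b) (hab : a < b) (hc : 0 ≤ c)
    (hb : 0 < b * σ + 1) (hx : 0 < x) (hx1 : x ≤ 1) :
    x ^ (p - 1) / (c * x ^ p + (b * σ + 1)) - 4 / p * x ^ (p / 2 - 1) ≤
      x ^ (a * σ + (b * σ + 1)) / (c * x ^ p + (b * σ + 1)) := by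
  set ε : ℝ := b * σ + 1
  have hp0 : 0 < p := critical_exponent_pos hp hab
  have hab1 : (a : ℝ) / b ≤ 1 :=
    (div_le_one (by exact_mod_cast hab.pos)).2 (by exact_mod_cast hab.le)
  have hfrac : ε / (c * x ^ p + ε) ≤ 1 :=
    (div_le_one (by positivity)).2 (le_add_of_nonneg_left (by positivity))
  -- Replacing `x ^ (2 ε)` by `1` costs `O(ε x ^ (-p / 2))`; the denominator `≥ ε` absorbs the `ε`.
  have hpow : x ^ (p - 1) * x ^ (-(p / 2)) = x ^ (p / 2 - 1) := by
    rw [← Real.rpow_add hx]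
    ring_nf
  calc x ^ (p - 1) / (c * x ^ p + ε) - 4 / p * x ^ (p / 2 - 1)
      ≤ x ^ (p - 1) / (c * x ^ p + ε) - 4 / p * x ^ (p / 2 - 1) * (ε / (c * x ^ p + ε)) :=
        sub_le_sub_left (mul_le_of_le_one_right (by positivity) hfrac) _
    _ = x ^ (p - 1) * (1 - 2 * ε * (x ^ (-(p / 2)) / (p / 2))) / (c * x ^ p + ε) := by
        rw [← hpow]
        field_simp
        ring
    _ ≤ x ^ (p - 1) * x ^ (2 * ε) / (c * x ^ p + ε) := by
        gcongr
        exact one_sub_mul_rpow_neg_le_rpow hx (by positivity) (by positivity)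
    _ ≤ x ^ (a * σ + ε) / (c * x ^ p + ε) := by
        rw [← Real.rpow_add hx]
        gcongr ?_ / _
        refine Real.rpow_le_rpow_of_exponent_ge hx hx1 ?_
        have hexponent := natCast_mul_eq_critical_exponent_sub_one_add (σ := σ) hp hab
        have hle : a / b * ε ≤ ε := mul_le_of_le_one_left hb.le hab1
        linarith

end CriticalExponent

section UpperBound

variable {a b q qt : ℕ} {p pt σ x y r : ℝ}

lemma abs_fD'_rpow_le_crossover_rpow (hq : 0 < q) (hσ : σ ≤ 0) (hx : 0 < x) (hy : 0 < y) :
    |fD' a b q qt p pt x y| ^ σ ≤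
      x ^ (a * σ) * (crossover q p x ^ (q * σ) * y ^ (((b - q : ℕ) : ℝ) * σ)) := by
  have hA : 0 < crossover q p x := crossover_pos
  calc |fD' a b q qt p pt x y| ^ σ
      ≤ (x ^ a * y ^ (b - q) * Real.exp (-1 / x ^ p)) ^ σ :=
        abs_fD'_rpow_le_of_le hx hy hσ (by positivity) (mul_pow_mul_exp_le_fD' hx hy)
    _ = x ^ (a * σ) * (crossover q p x ^ (q * σ) * y ^ (((b - q : ℕ) : ℝ) * σ)) := by
        rw [← crossover_pow hq, Real.mul_rpow (by positivity) (by positivity),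
          pow_mul_pow_rpow hx.le hy.le, ← Real.rpow_natCast_mul hA.le]
        ring

lemma integral_abs_fD'_rpow_le_of_le_crossover (hq : 0 < q) (hqb : q ≤ b) (hσ : σ ≤ 0)
    (hb : 0 < b * σ + 1) (hx : 0 < x) :
    ∫ y in 0..crossover q p x, |fD' a b q qt p pt x y| ^ σ ≤ x ^ (a * σ) * (b / q) := by
  have hb' : (0 : ℝ) < b := by exact_mod_cast hq.trans_le hqb
  have hA : 0 < crossover q p x := crossover_pos
  have hexponent : ((b - q : ℕ) : ℝ) * σ + 1 = (b * σ + 1) - q * σ := by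
    rw [Nat.cast_sub hqb]
    ring
  have hden : (q : ℝ) / b ≤ (b - q : ℕ) * σ + 1 := by
    rw [hexponent, div_le_iff₀ hb']
    nlinarith [show (q : ℝ) ≤ b by exact_mod_cast hqb]
  have hden0 : (0 : ℝ) < (b - q : ℕ) * σ + 1 := (by positivity : (0 : ℝ) < q / b).trans_le hden
  calc ∫ y in 0..crossover q p x, |fD' a b q qt p pt x y| ^ σ
      ≤ ∫ y in 0..crossover q p x,
          x ^ (a * σ) * (crossover q p x ^ (q * σ) * y ^ (((b - q : ℕ) : ℝ) * σ)) :=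
        intervalIntegral.integral_mono_on_of_le_Ioo hA.le
          (intervalIntegrable_abs_fD'_rpow hσ (by linarith) hx le_rfl hA.le)
          (((intervalIntegral.intervalIntegrable_rpow' (by linarith)).const_mul _).const_mul _)
          fun y hy => abs_fD'_rpow_le_crossover_rpow hq hσ hx hy.1
    _ = x ^ (a * σ) * (crossover q p x ^ (b * σ + 1) / ((b - q : ℕ) * σ + 1)) := by
        rw [intervalIntegral.integral_const_mul, intervalIntegral.integral_const_mul,
          integral_rpow (Or.inl (by linarith)), Real.zero_rpow hden0.ne', sub_zero,
          ← mul_div_assoc, ← Real.rpow_add hA, hexponent, add_sub_cancel]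
    _ ≤ x ^ (a * σ) * (1 / (q / b)) := by
        gcongr
        exact Real.rpow_le_one hA.le (crossover_le_one hx.le) hb.le
    _ = x ^ (a * σ) * (b / q) := by rw [one_div_div]

lemma integral_abs_fD'_rpow_le_of_crossover_le (hq : 0 < q) (hσ : σ ≤ 0)
    (hb : 0 < b * σ + 1) (hx : 0 < x) (hr : 0 ≤ r) :
    ∫ y in crossover q p x..1 + r, |fD' a b q qt p pt x y| ^ σ ≤
      x ^ (a * σ) * (r + 1 / (q * x ^ p + 1 / 2 * (b * σ + 1))) := by
  set ε : ℝ := b * σ + 1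
  have hε1 : ε ≤ 1 := natCast_mul_add_one_le_one hσ
  have hb1 : -1 < b * σ := by linarith
  have hA : 0 < crossover q p x := crossover_pos
  have hA1 : crossover q p x ≤ 1 + r := (crossover_le_one hx.le).trans (by linarith)
  have hBernoulli : (1 + r) ^ ε ≤ 1 + ε * r :=
    rpow_one_add_le_one_add_mul_self (by linarith) hb.le hε1
  have hexp : 1 - crossover q p x ^ ε ≤ ε * (1 / (q * x ^ p + 1 / 2 * ε)) := by
    rw [crossover_rpow]
    refine (one_sub_exp_neg_le_two_mul_div (by positivity)).trans_eq ?_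
    field_simp
  calc ∫ y in crossover q p x..1 + r, |fD' a b q qt p pt x y| ^ σ
      ≤ ∫ y in crossover q p x..1 + r, x ^ (a * σ) * y ^ (b * σ) :=
        intervalIntegral.integral_mono_on_of_le_Ioo hA1
          (intervalIntegrable_abs_fD'_rpow hσ hb1 hx hA.le (by linarith))
          ((intervalIntegral.intervalIntegrable_rpow' hb1).const_mul _)
          fun y hy => abs_fD'_rpow_le hx (hA.trans hy.1) hσ
    _ = x ^ (a * σ) * (((1 + r) ^ ε - crossover q p x ^ ε) / ε) := by
        rw [intervalIntegral.integral_const_mul, integral_rpow (Or.inl hb1)]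
    _ ≤ x ^ (a * σ) * (r + 1 / (q * x ^ p + 1 / 2 * ε)) := by
        gcongr
        rw [div_le_iff₀' hb]
        linarith

lemma integral_abs_fD'_rpow_le (hq : 0 < q) (hqb : q ≤ b) (hσ : σ ≤ 0) (hb : 0 < b * σ + 1)
    (hx : 0 < x) (hr : 0 ≤ r) :
    ∫ y in 0..r, |fD' a b q qt p pt x y| ^ σ ≤
      x ^ (a * σ) * (b / q + r + 1 / (q * x ^ p + 1 / 2 * (b * σ + 1))) := by
  have hA : 0 < crossover q p x := crossover_pos
  have hint : ∀ {s t : ℝ}, 0 ≤ s → 0 ≤ t →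
      IntervalIntegrable (fun y => |fD' a b q qt p pt x y| ^ σ) volume s t :=
    intervalIntegrable_abs_fD'_rpow hσ (by linarith) hx
  -- Passing from `r` to `1 + r` ensures that the crossover height lies in the interval.
  calc ∫ y in 0..r, |fD' a b q qt p pt x y| ^ σ
      ≤ ∫ y in 0..1 + r, |fD' a b q qt p pt x y| ^ σ :=
        intervalIntegral.integral_mono_interval le_rfl hr (by linarith)
          (Eventually.of_forall fun y => by positivity) (hint le_rfl (by linarith))
    _ = (∫ y in 0..crossover q p x, |fD' a b q qt p pt x y| ^ σ) +
          ∫ y in crossover q p x..1 + r, |fD' a b q qt p pt x y| ^ σ :=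
        (intervalIntegral.integral_add_adjacent_intervals (hint le_rfl hA.le)
          (hint hA.le (by linarith))).symm
    _ ≤ x ^ (a * σ) * (b / q) +
          x ^ (a * σ) * (r + 1 / (q * x ^ p + 1 / 2 * (b * σ + 1))) :=
        add_le_add (integral_abs_fD'_rpow_le_of_le_crossover hq hqb hσ hb hx)
          (integral_abs_fD'_rpow_le_of_crossover_le hq hσ hb hx hr)
    _ = x ^ (a * σ) * (b / q + r + 1 / (q * x ^ p + 1 / 2 * (b * σ + 1))) := by ring

lemma integral_abs_fD'_rpow_le_rpow_sub_one {r₁ r₂ : ℝ} (hp : p = 1 - (a : ℝ) / b) (hab : a < b)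
    (hq : 0 < q) (hqb : q ≤ b) (hσ : σ ≤ 0) (hb : 0 < b * σ + 1) (hx : 0 < x) (hxr : x ≤ r₁)
    (hr₂ : 0 ≤ r₂) :
    ∫ y in 0..r₂, |fD' a b q qt p pt x y| ^ σ ≤
      (1 + (b * σ + 1) * r₁) * (x ^ (p - 1) * (b / q + r₂) +
        x ^ (p - 1) / (q * x ^ p + 1 / 2 * (b * σ + 1))) := by
  calc ∫ y in 0..r₂, |fD' a b q qt p pt x y| ^ σ
      ≤ x ^ (a * σ) * (b / q + r₂ + 1 / (q * x ^ p + 1 / 2 * (b * σ + 1))) :=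
        integral_abs_fD'_rpow_le hq hqb hσ hb hx hr₂
    _ ≤ (1 + (b * σ + 1) * r₁) * x ^ (p - 1) *
          (b / q + r₂ + 1 / (q * x ^ p + 1 / 2 * (b * σ + 1))) := by
        gcongr
        exact rpow_natCast_mul_le hp hab hσ hb hx hxr
    _ = _ := by ring

lemma setIntegral_abs_fD'_rpow_le {r₁ r₂ : ℝ} (hp : p = 1 - (a : ℝ) / b) (hab : a < b)
    (hq : 0 < q) (hqb : q ≤ b) (hσ : σ ≤ 0) (hb : 0 < b * σ + 1) (hr₁ : 0 ≤ r₁) (hr₂ : 0 ≤ r₂) :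
    ∫ z in Icc (0 : ℝ) r₁ ×ˢ Icc (0 : ℝ) r₂, |fD' a b q qt p pt z.1 z.2| ^ σ ≤
      (1 + (b * σ + 1) * r₁) * ((b / q + r₂) * (r₁ ^ p / p) +
        modelIntegral p q (1 / 2 * (b * σ + 1)) r₁) := by
  have hp0 : 0 < p := critical_exponent_pos hp hab
  have ha1 : -1 < a * σ := neg_one_lt_natCast_mul hab hb
  have hb1 : -1 < b * σ := by linarith
  have hrpow : IntervalIntegrable (fun x : ℝ => x ^ (p - 1) * (b / q + r₂)) volume 0 r₁ :=
    (intervalIntegral.intervalIntegrable_rpow' (by linarith)).mul_const _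
  have hmodel : IntervalIntegrable
      (fun x : ℝ => x ^ (p - 1) / (q * x ^ p + 1 / 2 * (b * σ + 1))) volume 0 r₁ :=
    intervalIntegrable_rpow_sub_one_div hp0 (Nat.cast_nonneg q) (by positivity) hr₁
  rw [setIntegral_abs_fD'_rpow_eq hσ ha1 hb1 hr₁ hr₂]
  calc ∫ x in 0..r₁, ∫ y in 0..r₂, |fD' a b q qt p pt x y| ^ σ
      ≤ ∫ x in 0..r₁, (1 + (b * σ + 1) * r₁) * (x ^ (p - 1) * (b / q + r₂) +
          x ^ (p - 1) / (q * x ^ p + 1 / 2 * (b * σ + 1))) :=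
        intervalIntegral.integral_mono_on_of_le_Ioo hr₁
          (intervalIntegrable_integral_abs_fD'_rpow hσ ha1 hb1 hr₁ hr₂)
          ((hrpow.add hmodel).const_mul _) fun x hx =>
            integral_abs_fD'_rpow_le_rpow_sub_one hp hab hq hqb hσ hb hx.1 hx.2.le hr₂
    _ = _ := by
        rw [intervalIntegral.integral_const_mul, intervalIntegral.integral_add hrpow hmodel,
          intervalIntegral.integral_mul_const, integral_rpow (Or.inl (by linarith)),
          sub_add_cancel, Real.zero_rpow hp0.ne', sub_zero, modelIntegral,
          mul_comm (r₁ ^ p / p)]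

end UpperBound

section LowerBound

variable {a b q qt : ℕ} {p pt σ x η : ℝ}

lemma eventually_fD'_le (hpt : 0 < pt) (hq : 0 < q) (hqb : q ≤ b) (hqta : qt ≤ a) (hη : 0 < η) :
    ∀ᶠ x in 𝓝[>] 0, ∀ y, crossover q p x / x ≤ y → y ≤ x →
      fD' a b q qt p pt x y ≤ (1 + η) * (x ^ a * y ^ b) := by
  have hη2 : 0 < η / 2 := half_pos hη
  filter_upwards [(isLittleO_exp_neg_one_div_rpow_pow hpt qt).def hη2,
    Ioc_mem_nhdsGT (lt_min one_pos hη2)] with x hflat ⟨hx, hxη⟩ y hAy hyx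
  have hy : 0 < y := (div_pos crossover_pos hx).trans_le hAy
  have hl : Real.exp (-1 / x ^ p) ≤ η / 2 * y ^ q := by
    calc Real.exp (-1 / x ^ p) = crossover q p x ^ q := (crossover_pow hq).symm
      _ ≤ (x * y) ^ q := by
          gcongr
          · exact crossover_pos.le
          · rwa [div_le_iff₀' hx] at hAy
      _ = x ^ q * y ^ q := mul_pow x y q
      _ ≤ η / 2 * y ^ q := by
          gcongr
          exact (pow_le_of_le_one hx.le (hxη.trans (min_le_left _ _)) hq.ne').trans
            (hxη.trans (min_le_right _ _))
  have hm : Real.exp (-1 / y ^ pt) ≤ η / 2 * x ^ qt := by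
    calc Real.exp (-1 / y ^ pt) ≤ Real.exp (-1 / x ^ pt) := by
          simp only [neg_div]
          gcongr
      _ ≤ η / 2 * x ^ qt := by
          rwa [Real.norm_of_nonneg (Real.exp_pos _).le, Real.norm_of_nonneg (by positivity)]
            at hflat
  convert fD'_le_of_flat_le hx hy hqb hqta hl hm using 2
  ring

lemma eventually_neg_log_le (hp : 0 < p) (hq : 0 < q) (hη : 0 < η) :
    ∀ᶠ x in 𝓝[>] 0, -(2 * Real.log x) ≤ η * (q * x ^ p)⁻¹ := by
  have hκ : 0 < η / (2 * q) := by positivity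
  filter_upwards [(isLittleO_log_rpow_nhdsGT_zero (neg_lt_zero.2 hp)).def hκ,
    self_mem_nhdsWithin] with x hlog (hx : 0 < x)
  rw [Real.norm_of_nonneg (Real.rpow_nonneg hx.le _), Real.norm_eq_abs, Real.rpow_neg hx.le] at hlog
  calc -(2 * Real.log x) ≤ 2 * |Real.log x| := by linarith [neg_le_abs (Real.log x)]
    _ ≤ 2 * (η / (2 * q) * (x ^ p)⁻¹) := by gcongr
    _ = η * (q * x ^ p)⁻¹ := by field_simp

lemma crossover_div_sq_le (hx : 0 < x) (hlog : -(2 * Real.log x) ≤ η * (q * x ^ p)⁻¹) :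
    crossover q p x / x ^ 2 ≤ Real.exp (-((1 - η) * (q * x ^ p)⁻¹)) := by
  rw [← Real.log_le_iff_le_exp (div_pos crossover_pos (by positivity)),
    Real.log_div crossover_pos.ne' (by positivity), log_crossover, Real.log_pow]
  push_cast
  linarith

lemma div_le_rpow_sub_crossover_div_rpow {ε : ℝ} (hq : 0 < q) (hη : η ∈ Ioo (0 : ℝ) 1)
    (hε : 0 < ε) (hx : 0 < x) (hlog : -(2 * Real.log x) ≤ η * (q * x ^ p)⁻¹) :
    (1 - η) * (x ^ ε / (q * x ^ p + ε)) ≤ (x ^ ε - (crossover q p x / x) ^ ε) / ε := by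
  have hη1 : 0 < 1 - η := sub_pos.2 hη.2
  set t : ℝ := (1 - η) * (q * x ^ p)⁻¹ * ε with ht
  have ht0 : 0 < t := by positivity
  have hA : crossover q p x / x = x * (crossover q p x / x ^ 2) := by field_simp
  have hle : (crossover q p x / x ^ 2) ^ ε ≤ Real.exp (-t) := by
    calc (crossover q p x / x ^ 2) ^ ε ≤ Real.exp (-((1 - η) * (q * x ^ p)⁻¹)) ^ ε := by
          gcongr
          · exact div_nonneg crossover_pos.le (by positivity)
          · exact crossover_div_sq_le hx hlog
      _ = Real.exp (-t) := by rw [← Real.exp_mul, neg_mul]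
  calc (1 - η) * (x ^ ε / (q * x ^ p + ε))
      = x ^ ε * ((1 - η) * ε / (q * x ^ p + ε)) / ε := by field_simp
    _ ≤ x ^ ε * ((1 - η) * ε / (q * x ^ p + (1 - η) * ε)) / ε := by
        gcongr
        exact mul_le_of_le_one_left hε.le (by linarith [hη.1])
    _ = x ^ ε * (t / (1 + t)) / ε := by
        rw [ht]
        field_simp
    _ ≤ x ^ ε * (1 - (crossover q p x / x ^ 2) ^ ε) / ε := by
        gcongr
        linarith [div_one_add_le_one_sub_exp_neg ht0.le]
    _ = (x ^ ε - (crossover q p x / x) ^ ε) / ε := by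
        rw [hA, Real.mul_rpow hx.le (div_nonneg crossover_pos.le (by positivity))]
        ring

lemma le_integral_abs_fD'_rpow {r : ℝ} (hσ : σ ≤ 0) (hσ1 : -1 ≤ σ) (hb : 0 < b * σ + 1)
    (hη : 0 ≤ η) (hx : 0 < x) (hxr : x ≤ r) (hAx : crossover q p x / x ≤ x)
    (hf : ∀ y, crossover q p x / x ≤ y → y ≤ x →
      fD' a b q qt p pt x y ≤ (1 + η) * (x ^ a * y ^ b)) :
    (1 + η)⁻¹ * x ^ (a * σ) *
        ((x ^ (b * σ + 1) - (crossover q p x / x) ^ (b * σ + 1)) / (b * σ + 1)) ≤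
      ∫ y in 0..r, |fD' a b q qt p pt x y| ^ σ := by
  have hA : 0 < crossover q p x / x := div_pos crossover_pos hx
  have hb1 : -1 < b * σ := by linarith
  have hη' : (1 + η)⁻¹ ≤ (1 + η) ^ σ := by
    rw [← Real.rpow_neg_one]
    exact Real.rpow_le_rpow_of_exponent_le (by linarith) hσ1
  calc _ = ∫ y in crossover q p x / x..x, (1 + η)⁻¹ * x ^ (a * σ) * y ^ (b * σ) := by
        rw [intervalIntegral.integral_const_mul, integral_rpow (Or.inl hb1)]
    _ ≤ ∫ y in crossover q p x / x..x, |fD' a b q qt p pt x y| ^ σ := by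
        refine intervalIntegral.integral_mono_on_of_le_Ioo hAx
          ((intervalIntegral.intervalIntegrable_rpow' hb1).const_mul _)
          (intervalIntegrable_abs_fD'_rpow hσ hb1 hx hA.le hx.le) fun y hy => ?_
        have hy0 : 0 < y := hA.trans hy.1
        calc (1 + η)⁻¹ * x ^ (a * σ) * y ^ (b * σ)
            ≤ (1 + η) ^ σ * x ^ (a * σ) * y ^ (b * σ) := by gcongr
          _ = (1 + η) ^ σ * (x ^ (a * σ) * y ^ (b * σ)) := mul_assoc _ _ _
          _ ≤ |fD' a b q qt p pt x y| ^ σ :=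
              le_abs_fD'_rpow hx hy0 hσ (by linarith) (hf y hy.1.le hy.2.le)
    _ ≤ ∫ y in 0..r, |fD' a b q qt p pt x y| ^ σ :=
        intervalIntegral.integral_mono_interval hA.le hAx hxr
          (Eventually.of_forall fun y => by positivity)
          (intervalIntegrable_abs_fD'_rpow hσ hb1 hx le_rfl (hx.le.trans hxr))

lemma eventually_le_integral_abs_fD'_rpow {r : ℝ} (hp : 0 < p) (hpt : 0 < pt) (hq : 0 < q)
    (hqb : q ≤ b) (hqta : qt ≤ a) (hη : η ∈ Ioo (0 : ℝ) 1) (hr : 0 < r) :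
    ∀ᶠ x in 𝓝[>] 0, ∀ σ : ℝ, σ ≤ 0 → 0 < b * σ + 1 →
      (1 - η) / (1 + η) * (x ^ (a * σ + (b * σ + 1)) / (q * x ^ p + (b * σ + 1))) ≤
        ∫ y in 0..r, |fD' a b q qt p pt x y| ^ σ := by
  filter_upwards [eventually_fD'_le (p := p) hpt hq hqb hqta hη.1,
    eventually_neg_log_le hp hq hη.1, Ioc_mem_nhdsGT hr] with x hf hlog ⟨hx, hxr⟩ σ hσ hb
  have hη0 : 0 < η := hη.1
  have hη1 : 0 < 1 - η := sub_pos.2 hη.2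
  have hb1 : (1 : ℝ) ≤ b := by exact_mod_cast hq.trans_le hqb
  have hσ1 : -1 ≤ σ := by nlinarith
  have hAx : crossover q p x / x ≤ x := by
    have hsq := (crossover_div_sq_le hx hlog).trans (Real.exp_le_one_iff.2
      (neg_nonpos.2 (by positivity)))
    rw [div_le_one (by positivity)] at hsq
    rwa [div_le_iff₀ hx, ← sq]
  calc (1 - η) / (1 + η) * (x ^ (a * σ + (b * σ + 1)) / (q * x ^ p + (b * σ + 1)))
      = (1 + η)⁻¹ * x ^ (a * σ) *
          ((1 - η) * (x ^ (b * σ + 1) / (q * x ^ p + (b * σ + 1)))) := by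
        rw [Real.rpow_add hx]
        ring
    _ ≤ (1 + η)⁻¹ * x ^ (a * σ) *
          ((x ^ (b * σ + 1) - (crossover q p x / x) ^ (b * σ + 1)) / (b * σ + 1)) := by
        gcongr
        exact div_le_rpow_sub_crossover_div_rpow hq hη hb hx hlog
    _ ≤ _ := le_integral_abs_fD'_rpow hσ hσ1 hb hη0.le hx hxr hAx hf

lemma eventually_rpow_sub_one_div_sub_le_integral {r : ℝ} (hp : p = 1 - (a : ℝ) / b)
    (hab : a < b) (hpt : 0 < pt) (hq : 0 < q) (hqb : q ≤ b) (hqta : qt ≤ a)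
    (hη : η ∈ Ioo (0 : ℝ) 1) (hr : 0 < r) :
    ∀ᶠ x in 𝓝[>] 0, ∀ σ : ℝ, σ ≤ 0 → 0 < b * σ + 1 →
      (1 - η) / (1 + η) *
          (x ^ (p - 1) / (q * x ^ p + (b * σ + 1)) - 4 / p * x ^ (p / 2 - 1)) ≤
        ∫ y in 0..r, |fD' a b q qt p pt x y| ^ σ := by
  filter_upwards [eventually_le_integral_abs_fD'_rpow (critical_exponent_pos hp hab) hpt hq hqb
    hqta hη hr, Ioc_mem_nhdsGT one_pos] with x hle ⟨hx, hx1⟩ σ hσ hb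
  have hη0 : 0 < η := hη.1
  have hη1 : 0 < 1 - η := sub_pos.2 hη.2
  refine le_trans ?_ (hle σ hσ hb)
  gcongr
  exact rpow_sub_one_div_sub_le hp hab (Nat.cast_nonneg q) hb hx hx1

lemma exists_le_setIntegral_abs_fD'_rpow {r₁ r₂ : ℝ} (hp : p = 1 - (a : ℝ) / b) (hab : a < b)
    (hpt : 0 < pt) (hq : 0 < q) (hqb : q ≤ b) (hqta : qt ≤ a) (hη : η ∈ Ioo (0 : ℝ) 1)
    (hr₁ : 0 < r₁) (hr₂ : 0 < r₂) :
    ∃ x₀ > 0, ∃ C, ∀ σ : ℝ, σ ≤ 0 → 0 < b * σ + 1 →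
      (1 - η) / (1 + η) * (modelIntegral p q (b * σ + 1) x₀ - C) ≤
        ∫ z in Icc (0 : ℝ) r₁ ×ˢ Icc (0 : ℝ) r₂, |fD' a b q qt p pt z.1 z.2| ^ σ := by
  have hp0 : 0 < p := critical_exponent_pos hp hab
  obtain ⟨x₀, hx₀, hx₀_sub⟩ := mem_nhdsGT_iff_exists_Ioc_subset.1
    ((eventually_rpow_sub_one_div_sub_le_integral hp hab hpt hq hqb hqta hη hr₂).and
      (Ioc_mem_nhdsGT hr₁))
  have hx₀r : x₀ ≤ r₁ := (hx₀_sub ⟨hx₀, le_rfl⟩).2.2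
  have hx₀0 : 0 ≤ x₀ := le_of_lt hx₀
  refine ⟨x₀, hx₀, ∫ x in 0..x₀, 4 / p * x ^ (p / 2 - 1), fun σ hσ hb => ?_⟩
  have ha1 : -1 < a * σ := neg_one_lt_natCast_mul hab hb
  have hb1 : -1 < b * σ := by linarith
  have hmodel : IntervalIntegrable (fun x : ℝ => x ^ (p - 1) / (q * x ^ p + (b * σ + 1)))
      volume 0 x₀ :=
    intervalIntegrable_rpow_sub_one_div hp0 (Nat.cast_nonneg q) hb hx₀0
  have herror : IntervalIntegrable (fun x : ℝ => 4 / p * x ^ (p / 2 - 1)) volume 0 x₀ :=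
    (intervalIntegral.intervalIntegrable_rpow' (by linarith)).const_mul _
  rw [setIntegral_abs_fD'_rpow_eq hσ ha1 hb1 hr₁.le hr₂.le, modelIntegral,
    ← intervalIntegral.integral_sub hmodel herror, ← intervalIntegral.integral_const_mul]
  calc _ ≤ ∫ x in 0..x₀, ∫ y in 0..r₂, |fD' a b q qt p pt x y| ^ σ :=
        intervalIntegral.integral_mono_on_of_le_Ioo hx₀0
          ((hmodel.sub herror).const_mul _)
          (intervalIntegrable_integral_abs_fD'_rpow hσ ha1 hb1 hx₀0 hr₂.le)
          fun x hx => (hx₀_sub ⟨hx.1, hx.2.le⟩).1 σ hσ hb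
    _ ≤ ∫ x in 0..r₁, ∫ y in 0..r₂, |fD' a b q qt p pt x y| ^ σ :=
        intervalIntegral.integral_mono_interval le_rfl hx₀0 hx₀r
          (Eventually.of_forall fun x => intervalIntegral.integral_nonneg hr₂.le
            fun y _ => by positivity)
          (intervalIntegrable_integral_abs_fD'_rpow hσ ha1 hb1 hr₁.le hr₂.le)

end LowerBound

section Limit

variable {a b q qt : ℕ} {p pt r₁ r₂ : ℝ}

lemma tendsto_natCast_mul_add_one (hb : 0 < b) :
    Tendsto (fun σ : ℝ => b * σ + 1) (𝓝[Ioo (-1 / (b : ℝ)) 0] (-1 / b)) (𝓝[>] 0) := by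
  have hb0 : (0 : ℝ) < b := by exact_mod_cast hb
  refine tendsto_nhdsWithin_iff.2 ⟨?_, ?_⟩
  · have hcont : Continuous fun σ : ℝ => b * σ + 1 := by fun_prop
    have hzero : b * (-1 / b) + 1 = (0 : ℝ) := by
      field_simp
      ring
    exact hzero ▸ hcont.continuousWithinAt.tendsto
  · filter_upwards [self_mem_nhdsWithin] with σ hσ
    exact neg_lt_iff_pos_add.1 ((div_lt_iff₀' hb0).1 hσ.1)

lemma exists_lt_one_sub_div_one_add_mul {l m : ℝ} (h : m < l) :
    ∃ η ∈ Ioo (0 : ℝ) 1, m < (1 - η) / (1 + η) * l := by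
  have hcont : ContinuousAt (fun η : ℝ => (1 - η) / (1 + η) * l) 0 := by
    fun_prop (disch := norm_num)
  have hlt : ∀ᶠ η in 𝓝[>] (0 : ℝ), m < (1 - η) / (1 + η) * l :=
    (hcont.eventually_const_lt (by simpa)).filter_mono nhdsWithin_le_nhds
  obtain ⟨η, hηlt, hη⟩ := (hlt.and (Ioo_mem_nhdsGT one_pos)).exists
  exact ⟨η, hη, hηlt⟩

lemma eventually_inv_abs_log_mul_setIntegral_lt (hp : p = 1 - (a : ℝ) / b) (hab : a < b)
    (hq : 0 < q) (hqb : q ≤ b) (hr₁ : 0 < r₁) (hr₂ : 0 ≤ r₂) {m : ℝ} (hm : 1 / (p * q) < m) :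
    ∀ᶠ σ in 𝓝[Ioo (-1 / (b : ℝ)) 0] (-1 / b), |Real.log (b * σ + 1)|⁻¹ *
      ∫ z in Icc (0 : ℝ) r₁ ×ˢ Icc (0 : ℝ) r₂, |fD' a b q qt p pt z.1 z.2| ^ σ < m := by
  have hp0 : 0 < p := critical_exponent_pos hp hab
  have hone : Tendsto (fun ε : ℝ => 1 + ε * r₁) (𝓝[>] 0) (𝓝 1) := by
    have hcont : Continuous fun ε : ℝ => 1 + ε * r₁ := by fun_prop
    simpa using (hcont.tendsto 0).mono_left nhdsWithin_le_nhds
  have hlim := hone.mul (tendsto_inv_abs_log_mul_const_add_modelIntegral hp0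
    (Nat.cast_pos.2 hq) one_half_pos hr₁ ((b / q + r₂) * (r₁ ^ p / p)))
  rw [one_mul] at hlim
  have hε := tendsto_natCast_mul_add_one hab.pos
  filter_upwards [hε.eventually (hlim.eventually_lt_const hm),
    hε.eventually self_mem_nhdsWithin, self_mem_nhdsWithin] with σ hlt (hb : 0 < b * σ + 1) hσ
  calc |Real.log (b * σ + 1)|⁻¹ *
        ∫ z in Icc (0 : ℝ) r₁ ×ˢ Icc (0 : ℝ) r₂, |fD' a b q qt p pt z.1 z.2| ^ σ
      ≤ |Real.log (b * σ + 1)|⁻¹ * ((1 + (b * σ + 1) * r₁) * ((b / q + r₂) * (r₁ ^ p / p) +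
          modelIntegral p q (1 / 2 * (b * σ + 1)) r₁)) := by
        gcongr
        exact setIntegral_abs_fD'_rpow_le hp hab hq hqb hσ.2.le hb hr₁.le hr₂
    _ < m := (mul_left_comm _ _ _).trans_lt hlt

lemma eventually_lt_inv_abs_log_mul_setIntegral (hp : p = 1 - (a : ℝ) / b) (hab : a < b)
    (hpt : 0 < pt) (hq : 0 < q) (hqb : q ≤ b) (hqta : qt ≤ a) (hr₁ : 0 < r₁) (hr₂ : 0 < r₂)
    {m : ℝ} (hm : m < 1 / (p * q)) :
    ∀ᶠ σ in 𝓝[Ioo (-1 / (b : ℝ)) 0] (-1 / b), m < |Real.log (b * σ + 1)|⁻¹ *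
      ∫ z in Icc (0 : ℝ) r₁ ×ˢ Icc (0 : ℝ) r₂, |fD' a b q qt p pt z.1 z.2| ^ σ := by
  have hp0 : 0 < p := critical_exponent_pos hp hab
  obtain ⟨η, hη, hmη⟩ := exists_lt_one_sub_div_one_add_mul hm
  obtain ⟨x₀, hx₀, C, hC⟩ :=
    exists_le_setIntegral_abs_fD'_rpow hp hab hpt hq hqb hqta hη hr₁ hr₂
  have hlim := (tendsto_inv_abs_log_mul_const_add_modelIntegral hp0
    (Nat.cast_pos.2 hq) one_pos hx₀ (-C)).const_mul ((1 - η) / (1 + η))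
  have hε := tendsto_natCast_mul_add_one hab.pos
  filter_upwards [hε.eventually (hlim.eventually_const_lt hmη),
    hε.eventually self_mem_nhdsWithin, self_mem_nhdsWithin] with σ hlt (hb : 0 < b * σ + 1) hσ
  rw [one_mul, neg_add_eq_sub, mul_left_comm] at hlt
  exact hlt.trans_le (mul_le_mul_of_nonneg_left (hC σ hσ.2.le hb) (by positivity))

theorem stmt17_general (a b q qt : ℕ) (hab : a < b) (pt : ℝ) (hpt : 0 < pt) (hq : 0 < q)
    (hqb : q ≤ b) (hqta : qt ≤ a) (r₁ r₂ : ℝ) (hr₁ : 0 < r₁) (hr₂ : 0 < r₂) :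
    Tendsto
      (fun σ : ℝ => |Real.log ((b : ℝ) * σ + 1)|⁻¹ *
        ∫ z in Icc (0 : ℝ) r₁ ×ˢ Icc (0 : ℝ) r₂,
          |fD' a b q qt (1 - (a : ℝ) / b) pt z.1 z.2| ^ σ)
      (𝓝[Ioo (-1 / (b : ℝ)) 0] (-1 / b)) (𝓝 (1 / ((1 - (a : ℝ) / b) * q))) :=
  tendsto_order.2
    ⟨fun _ hm => eventually_lt_inv_abs_log_mul_setIntegral rfl hab hpt hq hqb hqta hr₁ hr₂ hm,
      fun _ hm => eventually_inv_abs_log_mul_setIntegral_lt rfl hab hq hqb hr₁ hr₂.le hm⟩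

end Limit

/-- Critical case `p = 1 - a/b`:
`lim_{σ → -1/b⁺} |log(bσ+1)|⁻¹ ∫_V |f|^σ = 1/(p q)`. -/
theorem stmt17 (a b q qt : ℕ) (ha : 2 ≤ a) (hab : a < b) (pt : ℝ) (hpt : 0 < pt)
    (hq : Even q) (hq2 : 2 ≤ q) (hqb : q ≤ b) (hqt : Even qt) (hqt2 : 2 ≤ qt)
    (hqta : qt ≤ a) (r₁ r₂ : ℝ) (hr₁ : r₁ ∈ Ioo (0 : ℝ) 1) (hr₂ : r₂ ∈ Ioo (0 : ℝ) 1) :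
    Tendsto
      (fun σ : ℝ => |Real.log ((b : ℝ) * σ + 1)|⁻¹ *
        ∫ z in Icc (0 : ℝ) r₁ ×ˢ Icc (0 : ℝ) r₂,
          |fD' a b q qt (1 - (a : ℝ) / b) pt z.1 z.2| ^ σ)
      (nhdsWithin (-1 / b) (Ioo (-1 / b) 0))
      (nhds (1 / ((1 - (a : ℝ) / b) * q))) :=
  stmt17_general a b q qt hab pt hpt (by omega) hqb hqta r₁ r₂ hr₁.1 hr₂.1
end
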